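/- Let A be a k-category, regarded as a dg category A_dg with hom-spaces concentrated in degree 0 and zero differential. Then the inclusion pretr(A_dg) ⊆ Twist((A_dg^[•])^⊕) of the full dg subcategory of one-sided twisted complexes is an equivalence of dg categories, and both dg categories are equivalent to Ch^b_dg(A), the dg category of bounded complexes whose objects are formal finite direct sums of objects of A. In particular, every twisted complex over (A_dg^[•])^⊕ is dg-isomorphic, via a permutation of its summands, to a one-sided twisted complex. -/

import Mathlib

/-! Core formal framework: dg categories over a field `k`, given by explicit data
(`DGData`) together with the dg-category axioms (`IsDGCat`), following the
conventions of the paper: hom-sets are `ℤ`-graded `k`-vector spaces, `d` has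
degree `1`, composition is associative of degree `0`, identities are closed of
degree `0`. -/

namespace P

universe u v

structure DGData (k : Type) [Field k] where
  Obj : Type u
  Hom : Obj → Obj → ℤ → Type v
  homAdd : ∀ A B i, AddCommGroup (Hom A B i)
  homMod : ∀ A B i, Module k (Hom A B i)
  d : ∀ {A B : Obj} {i : ℤ}, Hom A B i → Hom A B (i + 1)
  comp : ∀ {A B C : Obj} {i j : ℤ}, Hom B C j → Hom A B i → Hom A C (j + i)
  id : ∀ A : Obj, Hom A A 0

attribute [instance] DGData.homAdd DGData.homMod

variable {k : Type} [Field k]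

/-- Transport of a morphism along an equality of degrees. -/
def DGData.cast (D : DGData k) {A B : D.Obj} {i i' : ℤ} (h : i = i')
    (x : D.Hom A B i) : D.Hom A B i' := h ▸ x

/-- Transport of a morphism along equalities of its source, target and degree. -/
def DGData.hcast (D : DGData k) {A A' B B' : D.Obj} {i i' : ℤ}
    (hA : A = A') (hB : B = B') (hi : i = i') (x : D.Hom A B i) :
    D.Hom A' B' i' := by
  subst hA; subst hB; subst hi; exact x

/-- The axioms making the data `D` a dg category: hom-sets are complexes of
`k`-vector spaces, composition is `k`-bilinear, the graded Leibniz rule holds,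
composition is associative, and identities are closed two-sided units. -/
structure IsDGCat (D : DGData k) : Prop where
  d_add : ∀ {A B : D.Obj} {g : ℤ} (x y : D.Hom A B g), D.d (x + y) = D.d x + D.d y
  d_smul : ∀ {A B : D.Obj} {g : ℤ} (c : k) (x : D.Hom A B g), D.d (c • x) = c • D.d x
  comp_add_left : ∀ {A B C : D.Obj} {g h : ℤ} (β₁ β₂ : D.Hom B C h) (α : D.Hom A B g),
      D.comp (β₁ + β₂) α = D.comp β₁ α + D.comp β₂ α
  comp_add_right : ∀ {A B C : D.Obj} {g h : ℤ} (β : D.Hom B C h) (α₁ α₂ : D.Hom A B g),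
      D.comp β (α₁ + α₂) = D.comp β α₁ + D.comp β α₂
  comp_smul_left : ∀ {A B C : D.Obj} {g h : ℤ} (c : k) (β : D.Hom B C h) (α : D.Hom A B g),
      D.comp (c • β) α = c • D.comp β α
  comp_smul_right : ∀ {A B C : D.Obj} {g h : ℤ} (c : k) (β : D.Hom B C h) (α : D.Hom A B g),
      D.comp β (c • α) = c • D.comp β α
  d_d : ∀ {A B : D.Obj} {g : ℤ} (x : D.Hom A B g), D.d (D.d x) = 0
  leibniz : ∀ {A B C : D.Obj} {g h : ℤ} (β : D.Hom B C h) (α : D.Hom A B g),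
      D.d (D.comp β α) =
        D.cast (by ring) (D.comp (D.d β) α) +
          ((-1 : k) ^ h) • D.cast (by ring) (D.comp β (D.d α))
  assoc : ∀ {A B C E : D.Obj} {g h l : ℤ} (γ : D.Hom C E l) (β : D.Hom B C h)
      (α : D.Hom A B g),
      D.comp γ (D.comp β α) = D.cast (by ring) (D.comp (D.comp γ β) α)
  id_comp : ∀ {A B : D.Obj} {g : ℤ} (α : D.Hom A B g),
      D.cast (zero_add g) (D.comp (D.id B) α) = α
  comp_id : ∀ {A B : D.Obj} {g : ℤ} (α : D.Hom A B g),
      D.cast (add_zero g) (D.comp α (D.id A)) = α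
  d_id : ∀ A : D.Obj, D.d (D.id A) = 0

/-- A morphism is closed if its differential vanishes. -/
def DGData.IsClosed (D : DGData k) {A B : D.Obj} {g : ℤ} (x : D.Hom A B g) : Prop :=
  D.d x = 0

/-- The Maurer-Cartan equation `d(p) + p ∘ p = 0` for a degree `1` endomorphism. -/
def DGData.MC (D : DGData k) {A : D.Obj} (p : D.Hom A A 1) : Prop :=
  D.d p + D.comp p p = 0

/-- A chain of `n` (in fact, infinitely many; only the first `n` are ever used)
composable morphisms `α m : A m ⟶ A (m+1)`, where `α m` is recorded together
with its *shifted* degree `g m`, i.e. `α m` lies in degree `g m + 1`.  This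
encodes an element `s α_n ⊗ ⋯ ⊗ s α_1` of `S(A n, A (n+1)) ⊗ ⋯ ⊗ S(A 0, A 1)`
(the chain is indexed so that index `0` is the first morphism `α^1`). -/
abbrev DGData.Chain (D : DGData k) (A : ℕ → D.Obj) (g : ℕ → ℤ) : Type _ :=
  ∀ m : ℕ, D.Hom (A m) (A (m + 1)) (g m + 1)

/-- Partial sums of the (shifted) degrees of a chain. -/
def psum (g : ℕ → ℤ) (n : ℕ) : ℤ := ∑ m ∈ Finset.range n, g m

lemma psum_succ (g : ℕ → ℤ) (r : ℕ) : psum g (r + 1) = psum g r + g r :=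
  Finset.sum_range_succ g r

lemma psum_one (g : ℕ → ℤ) : psum g 1 = g 0 := by simp [psum]

lemma psum_two (g : ℕ → ℤ) : psum g 2 = g 0 + g 1 := by
  simp [psum, Finset.sum_range_succ]

lemma psum_const_zero (n : ℕ) : psum (fun _ => (0 : ℤ)) n = 0 := by simp [psum]

lemma psum_shift (g : ℕ → ℤ) (t : ℕ) :
    ∀ r, psum (fun m => g (t + m)) r = psum g (t + r) - psum g t := by
  intro r
  induction r with
  | zero => simp [psum]
  | succ r ih => rw [psum_succ, ih, Nat.add_succ, psum_succ]; ring

/-- Update of a chain in one slot (keeping the degree). -/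
def DGData.upd0 (D : DGData k) {A : ℕ → D.Obj} {g : ℕ → ℤ} (α : D.Chain A g)
    (m : ℕ) (v : D.Hom (A m) (A (m + 1)) (g m + 1)) : D.Chain A g := fun t =>
  if h : t = m then (by subst h; exact v) else α t

/-- Objects of the chain obtained by replacing the `j` consecutive entries
starting at position `l` by a single entry. -/
def splObj {τ : Type u} (A : ℕ → τ) (l j : ℕ) : ℕ → τ := fun t =>
  if t ≤ l then A t else A (t + j - 1)

/-- Degrees of the spliced chain; the new entry at position `l` has (shifted)
degree `w`. -/
def splG (g : ℕ → ℤ) (l j : ℕ) (w : ℤ) : ℕ → ℤ := fun t =>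
  if t < l then g t else if t = l then w else g (t + j - 1)

lemma splObj_le {τ : Type u} (A : ℕ → τ) {l j t : ℕ} (h : t ≤ l) :
    splObj A l j t = A t := if_pos h

lemma splObj_gt {τ : Type u} (A : ℕ → τ) {l j t : ℕ} (h : ¬ t ≤ l) :
    splObj A l j t = A (t + j - 1) := if_neg h

lemma splObj_zero {τ : Type u} (A : ℕ → τ) (l j : ℕ) : splObj A l j 0 = A 0 :=
  splObj_le A (Nat.zero_le l)

lemma splObj_last {τ : Type u} (A : ℕ → τ) {l j n : ℕ} (h1 : 1 ≤ j)
    (h2 : l + j ≤ n) : splObj A l j (n - j + 1) = A n := by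
  unfold splObj
  rw [if_neg (by omega)]
  exact congrArg A (by omega)

lemma splG_lt {g : ℕ → ℤ} {l j : ℕ} {w : ℤ} {t : ℕ} (h : t < l) :
    splG g l j w t = g t := by unfold splG; rw [if_pos h]

lemma splG_eq {g : ℕ → ℤ} {l j : ℕ} {w : ℤ} {t : ℕ} (h : t = l) :
    splG g l j w t = w := by unfold splG; rw [if_neg (by omega), if_pos h]

lemma splG_gt {g : ℕ → ℤ} {l j : ℕ} {w : ℤ} {t : ℕ} (h1 : ¬ t < l) (h2 : ¬ t = l) :
    splG g l j w t = g (t + j - 1) := by unfold splG; rw [if_neg h1, if_neg h2]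

/-- The sum of the degrees of the spliced chain, when the inserted entry has
the degree of a degree `1` operation applied to the block it replaces. -/
lemma psum_splG (g : ℕ → ℤ) {l j n : ℕ} (h1 : 1 ≤ j) (h2 : l + j ≤ n) :
    psum (splG g l j (psum (fun m => g (l + m)) j + 1)) (n - j + 1) =
      psum g n + 1 := by
  have hln : l + 1 ≤ n - j + 1 := by omega
  rw [psum, ← Finset.sum_range_add_sum_Ico _ hln]
  have e1 : (∑ t ∈ Finset.range (l + 1),
      splG g l j (psum (fun m => g (l + m)) j + 1) t)
      = psum g l + (psum (fun m => g (l + m)) j + 1) := by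
    rw [Finset.sum_range_succ]
    congr 1
    · exact Finset.sum_congr rfl fun t ht => splG_lt (Finset.mem_range.mp ht)
    · exact splG_eq rfl
  have e2 : (∑ t ∈ Finset.Ico (l + 1) (n - j + 1),
      splG g l j (psum (fun m => g (l + m)) j + 1) t)
      = ∑ u ∈ Finset.Ico (l + j) n, g u := by
    rw [Finset.sum_Ico_eq_sum_range, Finset.sum_Ico_eq_sum_range]
    have hc : n - j + 1 - (l + 1) = n - (l + j) := by omega
    rw [hc]
    refine Finset.sum_congr rfl fun i hi => ?_
    rw [splG_gt (by omega) (by omega)]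
    congr 1
    omega
  have e3 : (∑ u ∈ Finset.Ico (l + j) n, g u) = psum g n - psum g (l + j) := by
    rw [psum, psum, Finset.sum_Ico_eq_sub _ (by omega : l + j ≤ n)]
  rw [e1, e2, e3, psum_shift g l j]
  ring

/-- The spliced chain: replace the `j` entries starting at position `l` by the
single entry `v`. -/
def DGData.splChain (D : DGData k) {A : ℕ → D.Obj} {g : ℕ → ℤ} (α : D.Chain A g)
    (l j : ℕ) (hj : 1 ≤ j) {w : ℤ} (v : D.Hom (A l) (A (l + j)) (w + 1)) :
    D.Chain (splObj A l j) (splG g l j w) := fun t =>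
  if h1 : t < l then
    D.hcast (splObj_le A (le_of_lt h1)).symm (splObj_le A (by omega)).symm
      (by rw [splG_lt h1]) (α t)
  else if h2 : t = l then
    D.hcast (by rw [show t = l from h2]; exact (splObj_le A le_rfl).symm)
      (by rw [show t = l from h2, splObj_gt A (show ¬ l + 1 ≤ l by omega)]
          exact congrArg A (by omega))
      (by rw [splG_eq h2]) v
  else
    D.hcast (splObj_gt A (by omega)).symm
      (by rw [splObj_gt A (show ¬ t + 1 ≤ l by omega)]; exact congrArg A (by omega))
      (by rw [splG_gt h1 h2]) (α (t + j - 1))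

end P

namespace P

variable {k : Type} [Field k]

/-- Objects of the completion by direct sums: finite (possibly empty) families
of objects. -/
abbrev matObj (D : DGData k) : Type _ := (n : ℕ) × (Fin n → D.Obj)

/-- The completion by direct sums `A^⊕`: morphisms are matrices of morphisms of
`A`, the differential acts entrywise, composition is matrix multiplication and
identities are diagonal identity matrices. -/
def matData (D : DGData k) : DGData k where
  Obj := matObj D
  Hom A B g := ∀ (j : Fin B.1) (i : Fin A.1), D.Hom (A.2 i) (B.2 j) g
  homAdd _ _ _ := inferInstance
  homMod _ _ _ := inferInstance
  d := fun α j i => D.d (α j i)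
  comp := fun β α l i => ∑ j, D.comp (β l j) (α j i)
  id A := fun j i =>
    if h : i = j then D.hcast rfl (congrArg A.2 h) rfl (D.id (A.2 i)) else 0

/-- A direct sum of the finite family `As` in a dg category: an object together
with closed degree `0` inclusions and projections satisfying
`π i ∘ ι i = id` and `∑ i, ι i ∘ π i = id`. -/
structure DirectSumData (D : DGData k) (n : ℕ) (As : Fin n → D.Obj) where
  obj : D.Obj
  ι : ∀ i, D.Hom (As i) obj 0
  π : ∀ i, D.Hom obj (As i) 0
  ι_closed : ∀ i, D.d (ι i) = 0
  π_closed : ∀ i, D.d (π i) = 0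
  π_ι : ∀ i, D.cast (by norm_num) (D.comp (π i) (ι i)) = D.id (As i)
  sum_ι_π : (∑ i, D.cast (by norm_num : (0:ℤ) + 0 = 0) (D.comp (ι i) (π i))) = D.id obj

/-- A dg category *has direct sums* if it is equipped with a choice of direct
sum for every finite family of objects. -/
structure HasDirectSums (D : DGData k) where
  dsum : ∀ (n : ℕ) (As : Fin n → D.Obj), DirectSumData D n As

/-- Concatenation of two families of objects. -/
def concatPair (D : DGData k) (A B : matObj D) : matObj D :=
  ⟨A.1 + B.1, fun j => if h : (j : ℕ) < A.1 then A.2 ⟨j, h⟩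
    else B.2 ⟨(j : ℕ) - A.1, by have := j.isLt; omega⟩⟩

lemma concatPair_left (D : DGData k) (A B : matObj D) (j : Fin (A.1 + B.1))
    (r : Fin A.1) (h : (j : ℕ) = (r : ℕ)) : A.2 r = (concatPair D A B).2 j := by
  have hlt : (j : ℕ) < A.1 := by omega
  show A.2 r = if h' : (j : ℕ) < A.1 then A.2 ⟨(j : ℕ), h'⟩
    else B.2 ⟨(j : ℕ) - A.1, by have := j.isLt; omega⟩
  rw [dif_pos hlt]
  exact congrArg A.2 (Fin.ext h.symm)

lemma concatPair_right (D : DGData k) (A B : matObj D) (j : Fin (A.1 + B.1))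
    (r : Fin B.1) (h : (j : ℕ) = A.1 + (r : ℕ)) : B.2 r = (concatPair D A B).2 j := by
  have hlt : ¬ (j : ℕ) < A.1 := by omega
  show B.2 r = if h' : (j : ℕ) < A.1 then A.2 ⟨(j : ℕ), h'⟩
    else B.2 ⟨(j : ℕ) - A.1, by have := j.isLt; omega⟩
  rw [dif_neg hlt]
  exact congrArg B.2 (Fin.ext (show (r : ℕ) = (j : ℕ) - A.1 by omega))

/-- The block inclusion matrices of the concatenation of two families. -/
def blockι (D : DGData k) (A B : matObj D) :
    ∀ i : Fin 2, (matData D).Hom (![A, B] i) (concatPair D A B) 0 :=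
  Fin.cons
    (fun j r => if h : (j : ℕ) = (r : ℕ) then
        D.hcast rfl (concatPair_left D A B j r h) rfl (D.id (A.2 r)) else 0)
    (Fin.cons
      (fun j r => if h : (j : ℕ) = A.1 + (r : ℕ) then
          D.hcast rfl (concatPair_right D A B j r h) rfl (D.id (B.2 r)) else 0)
      finZeroElim)

/-- The block projection matrices of the concatenation of two families. -/
def blockπ (D : DGData k) (A B : matObj D) :
    ∀ i : Fin 2, (matData D).Hom (concatPair D A B) (![A, B] i) 0 :=
  Fin.cons
    (fun r j => if h : (j : ℕ) = (r : ℕ) then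
        D.hcast rfl (concatPair_left D A B j r h).symm rfl
          (D.id ((concatPair D A B).2 j)) else 0)
    (Fin.cons
      (fun r j => if h : (j : ℕ) = A.1 + (r : ℕ) then
          D.hcast rfl (concatPair_right D A B j r h).symm rfl
            (D.id ((concatPair D A B).2 j)) else 0)
      finZeroElim)

end P

namespace P

variable {k : Type} [Field k]

/-- Data of chosen translations: for every object `A` and `i : ℤ` an object
`A[i] = shift A i` together with a degree `i` morphism `s A i : A[i] → A` and a
candidate inverse. -/
structure TranslationData (D : DGData k) where
  shift : D.Obj → ℤ → D.Obj
  s : ∀ (A : D.Obj) (i : ℤ), D.Hom (shift A i) A i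
  sInv : ∀ (A : D.Obj) (i : ℤ), D.Hom A (shift A i) (-i)

/-- The axioms: `s A i` is a closed isomorphism of degree `i` with inverse
`sInv A i`. -/
structure IsTranslationData (D : DGData k) (T : TranslationData D) : Prop where
  s_closed : ∀ A i, D.d (T.s A i) = 0
  sInv_closed : ∀ A i, D.d (T.sInv A i) = 0
  s_sInv : ∀ A i, D.cast (by ring) (D.comp (T.s A i) (T.sInv A i)) = D.id A
  sInv_s : ∀ A i, D.cast (by ring) (D.comp (T.sInv A i) (T.s A i)) = D.id (T.shift A i)

/-- A dg category `has translations` if it is equipped with such data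
satisfying the axioms. -/
structure HasTranslations (D : DGData k) where
  T : TranslationData D
  isT : IsTranslationData D T

/-- The morphism `⟨j|α|i⟩ := sInv ∘ α ∘ s : A[i] → B[j]` between translations. -/
def trHom (D : DGData k) (T : TranslationData D) {A B : D.Obj} {a : ℤ}
    (j : ℤ) (α : D.Hom A B a) (i : ℤ) :
    D.Hom (T.shift A i) (T.shift B j) (-j + (a + i)) :=
  D.comp (T.sInv B j) (D.comp α (T.s A i))

/-- Objects of the completion by translations: pairs `A[i]`. -/
abbrev trObj (D : DGData k) : Type _ := D.Obj × ℤ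

/-- The completion by translations `A^[•]`: a morphism `A[i] → B[j]` of degree
`g` is a morphism `α : A → B` of `A` (of degree `g + j - i`), written
`⟨j|α|i⟩`; degrees, differential, composition and identities are given by the
formulas of Lemma `formulas_translations` of the paper. -/
def trData (D : DGData k) : DGData k where
  Obj := trObj D
  Hom A B g := D.Hom A.1 B.1 (g - A.2 + B.2)
  homAdd _ _ _ := inferInstance
  homMod _ _ _ := inferInstance
  d := fun {A B g} x => ((-1 : k) ^ B.2) • D.cast (by ring) (D.d x)
  comp := fun {A B C g h} y x => D.cast (by ring) (D.comp y x)
  id A := D.cast (by ring) (D.id A.1)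

/-- The canonical translations on the completion by translations:
`A[i][j] := A[i+j]` with structural isomorphism `⟨i| id_A |i+j⟩`. -/
def trTrans (D : DGData k) : TranslationData (trData D) where
  shift X j := (X.1, X.2 + j)
  s X j := D.cast (by ring) (D.id X.1)
  sInv X j := D.cast (by ring) (D.id X.1)

end P

namespace P

variable {k : Type} [Field k]

/-- Data of chosen twisted complexes: for every object `A` and Maurer-Cartan
degree `1` endomorphism `p` of `A`, an object `{A|p}` with a degree `0`
morphism `ι : {A|p} → A` and a candidate inverse. -/
structure TwistedData (D : DGData k) where
  obj : ∀ (A : D.Obj) (p : D.Hom A A 1), D.MC p → D.Obj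
  ι : ∀ (A : D.Obj) (p : D.Hom A A 1) (hp : D.MC p), D.Hom (obj A p hp) A 0
  ιInv : ∀ (A : D.Obj) (p : D.Hom A A 1) (hp : D.MC p), D.Hom A (obj A p hp) 0

/-- The axioms: `ι` is a degree `0` isomorphism (not necessarily closed)
satisfying `d(ι) + p ∘ ι = 0`. -/
structure IsTwistedData (D : DGData k) (T : TwistedData D) : Prop where
  ι_ιInv : ∀ A p hp, D.cast (by ring) (D.comp (T.ι A p hp) (T.ιInv A p hp)) = D.id A
  ιInv_ι : ∀ A p hp, D.cast (by ring) (D.comp (T.ιInv A p hp) (T.ι A p hp))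
      = D.id (T.obj A p hp)
  dι : ∀ A p hp, D.d (T.ι A p hp) + D.cast (by ring) (D.comp p (T.ι A p hp)) = 0

/-- A dg category `has twisted complexes` if it is equipped with such data
satisfying the axioms. -/
structure HasTwistedComplexes (D : DGData k) where
  T : TwistedData D
  isT : IsTwistedData D T

/-- The morphism `{q|α|p} := ι_q⁻¹ ∘ α ∘ ι_p : {A|p} → {B|q}`. -/
def twHom (D : DGData k) (T : TwistedData D) {A B : D.Obj} {a : ℤ}
    {q : D.Hom B B 1} (hq : D.MC q) (α : D.Hom A B a) {p : D.Hom A A 1}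
    (hp : D.MC p) : D.Hom (T.obj A p hp) (T.obj B q hq) (0 + (a + 0)) :=
  D.comp (T.ιInv B q hq) (D.comp α (T.ι A p hp))

/-- Objects of the completion by twisted complexes: pairs `{A|p}` with
`p : A → A` of degree `1` satisfying the Maurer-Cartan equation. -/
abbrev twObj (D : DGData k) : Type _ := (A : D.Obj) × {p : D.Hom A A 1 // D.MC p}

/-- The completion by twisted complexes `Twist(A)`: morphisms
`{A|p} → {B|q}` of degree `g` are morphisms `α : A → B` of degree `g`, written
`{q|α|p}`; composition and identities are those of `A`, and the differential is
`d({q|α|p}) = {q|(q∘α)|p} + {q|dα|p} + (-1)^{|α|+1} {q|(α∘p)|p}`. -/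
def twData (D : DGData k) : DGData k where
  Obj := twObj D
  Hom X Y g := D.Hom X.1 Y.1 g
  homAdd _ _ _ := inferInstance
  homMod _ _ _ := inferInstance
  d := fun {X Y g} α =>
    D.cast (by ring) (D.comp Y.2.1 α) + D.d α +
      ((-1 : k) ^ (g + 1)) • D.cast (by ring) (D.comp α X.2.1)
  comp := fun {X Y Z g h} β α => D.comp β α
  id X := D.id X.1

end P

namespace P

variable {k : Type} [Field k]

/-- A twisted complex over `(A^[•])^⊕` is *one-sided* if its Maurer-Cartan
matrix `q` is (strictly) triangular: `q j i = 0` whenever `j ≤ i`, where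
`q j i` denotes the entry with source the `i`-th summand and target the `j`-th
summand. -/
def OneSided {D : DGData k} (X : twObj (matData (trData D))) : Prop :=
  ∀ j i : Fin X.1.1, (j : ℕ) ≤ (i : ℕ) → X.2.1 j i = 0

/-- Objects of the pretriangulated hull: one-sided twisted complexes. -/
def pretrObj (D : DGData k) : Type _ := {X : twObj (matData (trData D)) // OneSided X}

/-- The pretriangulated hull `pretr(A)`, as the full dg subcategory of
`Twist((A^[•])^⊕)` on the one-sided twisted complexes. -/
def pretrData (D : DGData k) : DGData k where
  Obj := pretrObj D
  Hom X Y g := (twData (matData (trData D))).Hom X.1 Y.1 g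
  homAdd X Y g := (twData (matData (trData D))).homAdd X.1 Y.1 g
  homMod X Y g := (twData (matData (trData D))).homMod X.1 Y.1 g
  d := fun {X Y g} x => (twData (matData (trData D))).d (A := X.1) (B := Y.1) x
  comp := fun {X Y Z g h} y x =>
    (twData (matData (trData D))).comp (A := X.1) (B := Y.1) (C := Z.1) y x
  id X := (twData (matData (trData D))).id X.1

end P

namespace P

section Statement9

variable {k : Type} [Field k]

instance matHomAdd (D : DGData k) (A B : matObj D) (i : ℤ) :
    AddCommGroup ((matData D).Hom A B i) := (matData D).homAdd A B i

instance matHomMod (D : DGData k) (A B : matObj D) (i : ℤ) :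
    Module k ((matData D).Hom A B i) := (matData D).homMod A B i

instance twHomAdd (D : DGData k) (A B : twObj D) (i : ℤ) :
    AddCommGroup ((twData D).Hom A B i) := (twData D).homAdd A B i

/-- Objects of the dg category `Ch^b_dg(A)` of bounded complexes whose objects
are formal finite direct sums of objects of `A`. -/
structure ChbObj (D : DGData k) where
  X : ℤ → matObj D
  dd : ∀ i : ℤ, (matData D).Hom (X i) (X (i + 1)) 0
  dd_sq : ∀ i : ℤ, (matData D).comp (dd (i + 1)) (dd i) = 0
  bounded : ∃ N : ℕ, ∀ i : ℤ, (i < -(N : ℤ) ∨ (N : ℤ) < i) → (X i).1 = 0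

/-- The dg category `Ch^b_dg(A)`: hom-complexes
`(X,Y)^g = Π_i Hom(X^i, Y^{i+g})` with differential
`d(α) = d_Y ∘ α - (-1)^g α ∘ d_X`. -/
def chbData (D : DGData k) : DGData k where
  Obj := ChbObj D
  Hom X Y g := ∀ i : ℤ, (matData D).Hom (X.X i) (Y.X (i + g)) 0
  homAdd _ _ _ := inferInstance
  homMod _ _ _ := inferInstance
  d := fun {X Y g} α => fun i =>
    (matData D).hcast rfl (congrArg Y.X (by ring)) (by norm_num)
      ((matData D).comp (Y.dd (i + g)) (α i)) -
    ((-1 : k) ^ g) •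
      (matData D).hcast rfl (congrArg Y.X (by ring)) (by norm_num)
        ((matData D).comp (α (i + 1)) (X.dd i))
  comp := fun {X Y Z g h} β α => fun i =>
    (matData D).hcast rfl (congrArg Z.X (by ring)) (by norm_num)
      ((matData D).comp (β (i + g)) (α i))
  id X := fun i =>
    (matData D).hcast rfl (congrArg X.X (show i = i + 0 by ring)) rfl
      ((matData D).id (X.X i))

/-- The data of a dg functor. -/
structure DGFunData (D E : DGData k) where
  obj : D.Obj → E.Obj
  map : ∀ {A B : D.Obj} {g : ℤ}, D.Hom A B g → E.Hom (obj A) (obj B) g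

/-- The axioms of a dg functor. -/
structure IsDGFun {D E : DGData k} (F : DGFunData D E) : Prop where
  map_add : ∀ {A B : D.Obj} {g : ℤ} (x y : D.Hom A B g),
      F.map (x + y) = F.map x + F.map y
  map_smul : ∀ {A B : D.Obj} {g : ℤ} (c : k) (x : D.Hom A B g),
      F.map (c • x) = c • F.map x
  map_d : ∀ {A B : D.Obj} {g : ℤ} (x : D.Hom A B g), F.map (D.d x) = E.d (F.map x)
  map_comp : ∀ {A B C : D.Obj} {g h : ℤ} (y : D.Hom B C h) (x : D.Hom A B g),
      F.map (D.comp y x) = E.comp (F.map y) (F.map x)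
  map_id : ∀ A : D.Obj, F.map (D.id A) = E.id (F.obj A)

/-- A dg functor is an equivalence of dg categories if it is fully faithful
(in each degree) and every object of the target is connected to an object in
the image by a closed degree-0 isomorphism. -/
def IsDGEquivalence {D E : DGData k} (F : DGFunData D E) : Prop :=
  IsDGFun F ∧
  (∀ (A B : D.Obj) (g : ℤ), Function.Bijective (fun x : D.Hom A B g => F.map x)) ∧
  (∀ Y : E.Obj, ∃ (X : D.Obj) (u : E.Hom (F.obj X) Y 0) (v : E.Hom Y (F.obj X) 0),
    E.d u = 0 ∧ E.d v = 0 ∧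
    E.cast (by norm_num) (E.comp u v) = E.id Y ∧
    E.cast (by norm_num) (E.comp v u) = E.id (F.obj X))

/-- The inclusion `pretr(A) ⊆ Twist((A^[•])^⊕)`. -/
def pretrIncl (D : DGData k) : DGFunData (pretrData D) (twData (matData (trData D))) where
  obj X := X.1
  map := fun {A B g} x => x

/-- The permutation matrix associated to a permutation of the summands. -/
def permMat (D : DGData k) (M : matObj (trData D)) (σ : Equiv.Perm (Fin M.1)) :
    (matData (trData D)).Hom M ⟨M.1, fun r => M.2 (σ r)⟩ 0 := fun j i =>
  if h : σ j = i then
    (trData D).hcast rfl (congrArg M.2 h.symm) rfl ((trData D).id (M.2 i))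
  else 0

/-! As the hom-spaces of `A` sit in degree `0`, the grading of morphisms between formal direct sums
of translations only records the shifts of the summands. Hence an object of `Twist((A^[•])^⊕)` and
an object of `Ch^b_dg(A)` amount to the same thing: a finite family of objects of `A` with integer
degrees and one square-zero matrix of degree `1`. Such a matrix strictly increases degrees, so
sorting the summands by degree makes it triangular, that is, one-sided. -/

namespace DGData

variable {D : DGData k} {A B C : D.Obj} {i j l : ℤ}

@[simp]
lemma cast_self (h : i = i) (x : D.Hom A B i) : D.cast h x = x := rfl

@[simp]
lemma cast_cast (h : i = j) (h' : j = l) (x : D.Hom A B i) :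
    D.cast h' (D.cast h x) = D.cast (h.trans h') x := by
  subst h h'; rfl

@[simp]
lemma cast_add (h : i = j) (x y : D.Hom A B i) :
    D.cast h (x + y) = D.cast h x + D.cast h y := by
  subst h; rfl

@[simp]
lemma cast_smul (h : i = j) (c : k) (x : D.Hom A B i) :
    D.cast h (c • x) = c • D.cast h x := by
  subst h; rfl

@[simp]
lemma cast_zero (h : i = j) : D.cast h (0 : D.Hom A B i) = 0 := by
  subst h; rfl

lemma cast_eq_iff (h : i = j) (x : D.Hom A B i) (y : D.Hom A B j) :
    D.cast h x = y ↔ x = D.cast h.symm y := by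
  subst h; rfl

@[simp]
lemma comp_cast_left (h : j = l) (y : D.Hom B C j) (x : D.Hom A B i) :
    D.comp (D.cast h y) x = D.cast (by rw [h]) (D.comp y x) := by
  subst h; rfl

@[simp]
lemma comp_cast_right (h : i = l) (y : D.Hom B C j) (x : D.Hom A B i) :
    D.comp y (D.cast h x) = D.cast (by rw [h]) (D.comp y x) := by
  subst h; rfl

@[simp]
lemma d_cast (h : i = j) (x : D.Hom A B i) : D.d (D.cast h x) = D.cast (by rw [h]) (D.d x) := by
  subst h; rfl

end DGData

namespace IsDGCat

variable {D : DGData k} {A B C : D.Obj} {g h : ℤ}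

lemma zero_comp (hD : IsDGCat D) (x : D.Hom A B g) : D.comp (0 : D.Hom B C h) x = 0 := by
  simpa using hD.comp_smul_left (0 : k) (0 : D.Hom B C h) x

lemma comp_zero (hD : IsDGCat D) (y : D.Hom B C h) : D.comp y (0 : D.Hom A B g) = 0 := by
  simpa using hD.comp_smul_right (0 : k) y (0 : D.Hom A B g)

lemma d_zero (hD : IsDGCat D) : D.d (0 : D.Hom A B g) = 0 := by
  simpa using hD.d_smul (0 : k) (0 : D.Hom A B g)

lemma d_comp_of_closed_left (hD : IsDGCat D) {y : D.Hom B C 0} (hy : D.d y = 0)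
    (x : D.Hom A B g) : D.d (D.comp y x) = D.cast (by ring) (D.comp y (D.d x)) := by
  simp [hD.leibniz, hy, hD.zero_comp]

lemma d_comp_of_closed_right (hD : IsDGCat D) (y : D.Hom B C h) {x : D.Hom A B g}
    (hx : D.d x = 0) : D.d (D.comp y x) = D.cast (by ring) (D.comp (D.d y) x) := by
  simp [hD.leibniz, hx, hD.comp_zero]

end IsDGCat

/-- The closed degree `0` morphisms `u` and `v` are mutually inverse dg isomorphisms. The clauses
are those of the essential surjectivity condition in `IsDGEquivalence`. -/
def IsDGInverse (D : DGData k) {A B : D.Obj} (u : D.Hom A B 0) (v : D.Hom B A 0) : Prop :=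
  D.d u = 0 ∧ D.d v = 0 ∧ D.cast (by norm_num) (D.comp u v) = D.id B ∧
    D.cast (by norm_num) (D.comp v u) = D.id A

namespace IsDGInverse

variable {D : DGData k} {A B C : D.Obj} {u : D.Hom A B 0} {v : D.Hom B A 0}

lemma symm (h : IsDGInverse D u v) : IsDGInverse D v u :=
  ⟨h.2.1, h.1, h.2.2.2, h.2.2.1⟩

lemma comp_comp_cancel (hD : IsDGCat D) (h : IsDGInverse D u v) {g : ℤ} (x : D.Hom B C g) :
    D.comp (D.comp x u) v = D.cast (by ring) x := by
  have huv : D.comp u v = D.cast (by norm_num) (D.id B) := (D.cast_eq_iff _ _ _).1 h.2.2.1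
  have hassoc := hD.assoc x u v
  rw [huv, DGData.comp_cast_right, eq_comm, DGData.cast_eq_iff] at hassoc
  conv_rhs => rw [← hD.comp_id x]
  simpa using hassoc

lemma comp (hD : IsDGCat D) (h : IsDGInverse D u v) {u' : D.Hom B C 0} {v' : D.Hom C B 0}
    (h' : IsDGInverse D u' v') :
    IsDGInverse D (D.cast (zero_add 0) (D.comp u' u)) (D.cast (zero_add 0) (D.comp v v')) := by
  refine ⟨?_, ?_, ?_, ?_⟩
  · simp [hD.d_comp_of_closed_left h'.1, h.1, hD.comp_zero]
  · simp [hD.d_comp_of_closed_left h.2.1, h'.2.1, hD.comp_zero]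
  · simpa [hD.assoc, h.comp_comp_cancel hD] using h'.2.2.1
  · simpa [hD.assoc, h'.symm.comp_comp_cancel hD] using h.2.2.2

end IsDGInverse

namespace DGData

/-- The morphism `v ∘ α ∘ u`, for `u` and `v` of degree `0`, in the degree of `α`. It is used to
transport morphisms along dg isomorphisms of their source and target. -/
def conj (D : DGData k) {A A' B B' : D.Obj} (v : D.Hom B B' 0) (u : D.Hom A' A 0) {g : ℤ}
    (α : D.Hom A B g) : D.Hom A' B' g :=
  D.cast (by ring) (D.comp (D.comp v α) u)

variable {D : DGData k} {A A' B B' C C' : D.Obj} {g h : ℤ}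

lemma conj_add (hD : IsDGCat D) (v : D.Hom B B' 0) (u : D.Hom A' A 0) (α β : D.Hom A B g) :
    D.conj v u (α + β) = D.conj v u α + D.conj v u β := by
  simp [conj, hD.comp_add_left, hD.comp_add_right]

lemma conj_smul (hD : IsDGCat D) (v : D.Hom B B' 0) (u : D.Hom A' A 0) (c : k)
    (α : D.Hom A B g) : D.conj v u (c • α) = c • D.conj v u α := by
  simp [conj, hD.comp_smul_left, hD.comp_smul_right]

lemma d_conj (hD : IsDGCat D) {v : D.Hom B B' 0} {u : D.Hom A' A 0} (hv : D.d v = 0)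
    (hu : D.d u = 0) (α : D.Hom A B g) : D.d (D.conj v u α) = D.conj v u (D.d α) := by
  simp [conj, hD.d_comp_of_closed_right _ hu, hD.d_comp_of_closed_left hv]

lemma conj_comp_conj (hD : IsDGCat D) {u : D.Hom B' B 0} {v : D.Hom B B' 0}
    (huv : IsDGInverse D u v) (w : D.Hom C C' 0) (t : D.Hom A' A 0) (β : D.Hom B C h)
    (α : D.Hom A B g) :
    D.comp (D.conj w u β) (D.conj v t α) = D.conj w t (D.comp β α) := by
  simp [conj, hD.assoc, huv.comp_comp_cancel hD]

lemma conj_id (hD : IsDGCat D) {u : D.Hom A' A 0} {v : D.Hom A A' 0} (huv : IsDGInverse D u v) :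
    D.conj v u (D.id A) = D.id A' := by
  have hv : D.comp v (D.id A) = D.cast (by norm_num) v := (D.cast_eq_iff _ _ _).1 (hD.comp_id v)
  simpa [conj, hv] using huv.2.2.2

lemma conj_conj_cancel (hD : IsDGCat D) {u : D.Hom A' A 0} {v : D.Hom A A' 0}
    (huv : IsDGInverse D u v) {w : D.Hom B' B 0} {t : D.Hom B B' 0} (hwt : IsDGInverse D w t)
    (α : D.Hom A B g) : D.conj w v (D.conj t u α) = α := by
  have hwtα : D.comp (D.comp w t) α = D.cast (by ring) α := by
    have h0 : D.comp w t = D.cast (by norm_num) (D.id B) := (D.cast_eq_iff _ _ _).1 hwt.2.2.1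
    conv_rhs => rw [← hD.id_comp α]
    simp [h0]
  simp [conj, hD.assoc, huv.comp_comp_cancel hD, hwtα]

lemma conj_bijective (hD : IsDGCat D) {u : D.Hom A' A 0} {v : D.Hom A A' 0}
    (huv : IsDGInverse D u v) {w : D.Hom B' B 0} {t : D.Hom B B' 0} (hwt : IsDGInverse D w t) :
    Function.Bijective (D.conj t u : D.Hom A B g → D.Hom A' B' g) :=
  Function.bijective_iff_has_inverse.2
    ⟨D.conj w v, conj_conj_cancel hD huv hwt, conj_conj_cancel hD huv.symm hwt.symm⟩

end DGData

namespace DGFunData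

variable {D E L : DGData k}

@[simp]
lemma map_cast (F : DGFunData D E) {A B : D.Obj} {g h : ℤ} (hgh : g = h) (x : D.Hom A B g) :
    F.map (D.cast hgh x) = E.cast hgh (F.map x) := by
  subst hgh; rfl

/-- The composition `G ∘ F` of dg functors. -/
def comp (G : DGFunData E L) (F : DGFunData D E) : DGFunData D L where
  obj X := G.obj (F.obj X)
  map x := G.map (F.map x)

/-- All the maps induced by `F` on hom-spaces, in every degree, are injective. -/
def Faithful (F : DGFunData D E) : Prop :=
  ∀ (A B : D.Obj) (g : ℤ), Function.Injective (fun x : D.Hom A B g => F.map x)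

end DGFunData

lemma IsDGFun.map_zero {D E : DGData k} {F : DGFunData D E} (hF : IsDGFun F) {A B : D.Obj}
    {g : ℤ} : F.map (0 : D.Hom A B g) = 0 := by
  simpa using hF.map_smul (0 : k) (0 : D.Hom A B g)

section Faithful

variable {D E : DGData k} {F : DGFunData D E}

lemma IsDGCat.of_faithful (hE : IsDGCat E) (hF : IsDGFun F) (hf : F.Faithful) : IsDGCat D where
  d_add x y := hf _ _ _ (by simp [hF.map_d, hF.map_add, hE.d_add])
  d_smul c x := hf _ _ _ (by simp [hF.map_d, hF.map_smul, hE.d_smul])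
  comp_add_left y y' x := hf _ _ _ (by simp [hF.map_comp, hF.map_add, hE.comp_add_left])
  comp_add_right y x x' := hf _ _ _ (by simp [hF.map_comp, hF.map_add, hE.comp_add_right])
  comp_smul_left c y x := hf _ _ _ (by simp [hF.map_comp, hF.map_smul, hE.comp_smul_left])
  comp_smul_right c y x := hf _ _ _ (by simp [hF.map_comp, hF.map_smul, hE.comp_smul_right])
  d_d x := hf _ _ _ (by simp [hF.map_d, hE.d_d, hF.map_zero])
  leibniz y x := hf _ _ _ (by
    simp [hF.map_d, hF.map_comp, hF.map_add, hF.map_smul, hE.leibniz])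
  assoc z y x := hf _ _ _ (by simp [hF.map_comp, hE.assoc])
  id_comp x := hf _ _ _ (by simp [hF.map_comp, hF.map_id, hE.id_comp])
  comp_id x := hf _ _ _ (by simp [hF.map_comp, hF.map_id, hE.comp_id])
  d_id A := hf _ _ _ (by simp [hF.map_d, hF.map_id, hE.d_id, hF.map_zero])

lemma IsDGInverse.map (hF : IsDGFun F) {A B : D.Obj} {u : D.Hom A B 0} {v : D.Hom B A 0}
    (h : IsDGInverse D u v) : IsDGInverse E (F.map u) (F.map v) := by
  obtain ⟨hu, hv, huv, hvu⟩ := h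
  refine ⟨?_, ?_, ?_, ?_⟩
  · rw [← hF.map_d, hu, hF.map_zero]
  · rw [← hF.map_d, hv, hF.map_zero]
  · rw [← hF.map_comp, ← F.map_cast, huv, hF.map_id]
  · rw [← hF.map_comp, ← F.map_cast, hvu, hF.map_id]

lemma IsDGInverse.of_map (hF : IsDGFun F) (hf : F.Faithful) {A B : D.Obj} {u : D.Hom A B 0}
    {v : D.Hom B A 0} (h : IsDGInverse E (F.map u) (F.map v)) : IsDGInverse D u v := by
  obtain ⟨hu, hv, huv, hvu⟩ := h
  refine ⟨hf _ _ _ ?_, hf _ _ _ ?_, hf _ _ _ ?_, hf _ _ _ ?_⟩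
  · simp [hF.map_d, hu, hF.map_zero]
  · simp [hF.map_d, hv, hF.map_zero]
  · change F.map (D.cast _ (D.comp u v)) = F.map (D.id B)
    rw [F.map_cast, hF.map_comp, hF.map_id, huv]
  · change F.map (D.cast _ (D.comp v u)) = F.map (D.id A)
    rw [F.map_cast, hF.map_comp, hF.map_id, hvu]

end Faithful

namespace IsDGEquivalence

variable {D E L : DGData k} {F : DGFunData D E}

lemma isDGFun (hF : IsDGEquivalence F) : IsDGFun F := hF.1

lemma bijective (hF : IsDGEquivalence F) (A B : D.Obj) (g : ℤ) :
    Function.Bijective (fun x : D.Hom A B g => F.map x) := hF.2.1 A B g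

lemma faithful (hF : IsDGEquivalence F) : F.Faithful := fun A B g ↦ (hF.bijective A B g).injective

lemma exists_isDGInverse (hF : IsDGEquivalence F) (Y : E.Obj) :
    ∃ (X : D.Obj) (u : E.Hom (F.obj X) Y 0) (v : E.Hom Y (F.obj X) 0), IsDGInverse E u v :=
  hF.2.2 Y

lemma exists_isDGInverse_of_map (hF : IsDGEquivalence F) {A B : D.Obj}
    {u : E.Hom (F.obj A) (F.obj B) 0} {v : E.Hom (F.obj B) (F.obj A) 0} (h : IsDGInverse E u v) :
    ∃ (u' : D.Hom A B 0) (v' : D.Hom B A 0), F.map u' = u ∧ F.map v' = v ∧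
      IsDGInverse D u' v' := by
  obtain ⟨u', rfl⟩ := (hF.bijective A B 0).surjective u
  obtain ⟨v', rfl⟩ := (hF.bijective B A 0).surjective v
  exact ⟨u', v', rfl, rfl, h.of_map hF.isDGFun hF.faithful⟩

lemma comp (hL : IsDGCat L) {G : DGFunData E L} (hG : IsDGEquivalence G)
    (hF : IsDGEquivalence F) : IsDGEquivalence (G.comp F) := by
  have hGf := hG.isDGFun
  have hFf := hF.isDGFun
  refine ⟨?_, fun A B g ↦ (hG.bijective _ _ g).comp (hF.bijective A B g), fun Z ↦ ?_⟩
  · constructor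
    · exact fun x y ↦ (congrArg G.map (hFf.map_add x y)).trans (hGf.map_add _ _)
    · exact fun c x ↦ (congrArg G.map (hFf.map_smul c x)).trans (hGf.map_smul _ _)
    · intros; simp only [DGFunData.comp, hFf.map_d, hGf.map_d]
    · intros; simp only [DGFunData.comp, hFf.map_comp, hGf.map_comp]
    · intros; simp only [DGFunData.comp, hFf.map_id, hGf.map_id]
  · obtain ⟨Y, u, v, huv⟩ := hG.exists_isDGInverse Z
    obtain ⟨X, u', v', huv'⟩ := hF.exists_isDGInverse Y
    exact ⟨X, _, _, (huv'.map hGf).comp hL huv⟩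

theorem exists_inverse (hE : IsDGCat E) (hF : IsDGEquivalence F) :
    ∃ G : DGFunData E D, IsDGEquivalence G := by
  have hFf := hF.isDGFun
  choose obj u v huv using hF.exists_isDGInverse
  choose lift map_lift using fun (A B : E.Obj) (g : ℤ) ↦
    (hF.bijective (obj A) (obj B) g).surjective
  let G : DGFunData E D :=
    { obj := obj
      map := fun {A B g} α ↦ lift A B g (E.conj (v B) (u A) α) }
  have map_G {A B : E.Obj} {g : ℤ} (α : E.Hom A B g) :
      F.map (G.map α) = E.conj (v B) (u A) α := map_lift A B g _
  refine ⟨G, ?_, fun A B g ↦ ?_, fun X ↦ ?_⟩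
  · constructor
    · intros; apply hF.faithful; simp [map_G, hFf.map_add, DGData.conj_add hE]
    · intros; apply hF.faithful; simp [map_G, hFf.map_smul, DGData.conj_smul hE]
    · intros; apply hF.faithful
      simp [map_G, hFf.map_d, DGData.d_conj hE (huv _).2.1 (huv _).1]
    · intros; apply hF.faithful
      simp [map_G, hFf.map_comp, DGData.conj_comp_conj hE (huv _)]
    · exact fun Y ↦ hF.faithful _ _ _
        ((map_G _).trans ((DGData.conj_id hE (huv Y)).trans (hFf.map_id (G.obj Y)).symm))
  · refine (Function.Bijective.of_comp_iff' (hF.bijective _ _ g) _).1 ?_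
    simpa only [Function.comp_def, map_G] using DGData.conj_bijective hE (huv A) (huv B)
  · obtain ⟨u', v', -, -, huv'⟩ := hF.exists_isDGInverse_of_map (huv (F.obj X))
    exact ⟨F.obj X, u', v', huv'⟩

end IsDGEquivalence

section Deg0

open CategoryTheory

/-- The ordinary `k`-linear category underlying a dg category: same objects, and the degree `0`
morphisms. For a `k`-category regarded as a dg category, it is that `k`-category. -/
structure Deg0 {D : DGData k} (hD : IsDGCat D) where
  obj : D.Obj

namespace Deg0

variable {D : DGData k} (hD : IsDGCat D)

instance : Category (Deg0 hD) where
  Hom A B := D.Hom A.obj B.obj 0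
  id A := D.id A.obj
  comp f g := D.cast (zero_add 0) (D.comp g f)
  id_comp := hD.comp_id
  comp_id := hD.id_comp
  assoc f g h := by
    rw [DGData.comp_cast_right, DGData.comp_cast_left, hD.assoc, DGData.cast_cast]

variable {hD} in
lemma comp_def {A B C : Deg0 hD} (f : A ⟶ B) (g : B ⟶ C) :
    f ≫ g = D.cast (zero_add 0) (D.comp g f) := rfl

instance : Preadditive (Deg0 hD) where
  homGroup A B := D.homAdd A.obj B.obj 0
  add_comp _ _ _ f f' g := by rw [comp_def, hD.comp_add_right, D.cast_add]; rfl
  comp_add _ _ _ f g g' := by rw [comp_def, hD.comp_add_left, D.cast_add]; rfl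

instance : Linear k (Deg0 hD) where
  homModule A B := D.homMod A.obj B.obj 0
  smul_comp _ _ _ c f g := by rw [comp_def, hD.comp_smul_right, D.cast_smul]; rfl
  comp_smul _ _ _ f c g := by rw [comp_def, hD.comp_smul_left, D.cast_smul]; rfl

end Deg0

instance linearMat {C : Type*} [Category* C] [Preadditive C] [Linear k C] :
    Linear k (Mat_ C) where
  homModule M N := inferInstanceAs (Module k (∀ (i : M.ι) (j : N.ι), M.X i ⟶ N.X j))
  smul_comp M N K c f g := by
    ext i j
    exact (Finset.sum_congr rfl fun _ _ ↦ Linear.smul_comp _ _ _ _ _ _).trans Finset.smul_sum.symm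
  comp_smul M N K f c g := by
    ext i j
    exact (Finset.sum_congr rfl fun _ _ ↦ Linear.comp_smul _ _ _ _ _ _).trans Finset.smul_sum.symm

end Deg0

section MatComplex

open CategoryTheory

variable {C : Type*} [Category* C] [Preadditive C] [Linear k C]

/-- A finite family of objects of `C` with integer degrees, standing for a bounded graded object
whose summands may be listed in any order. -/
structure GradedMat (C : Type*) extends Mat_ C where
  deg : ι → ℤ

namespace GradedMat

variable (k) in
/-- The matrices raising the degree by `g`: the entry from the summand `i` to the summand `j`
vanishes unless `j` lies `g` degrees above `i`. -/
def homogeneous (M N : GradedMat C) (g : ℤ) : Submodule k (M.toMat_ ⟶ N.toMat_) where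
  carrier := {f | ∀ i j, N.deg j ≠ M.deg i + g → f i j = 0}
  add_mem' hf hf' i j h := by rw [Mat_.add_apply, hf i j h, hf' i j h, add_zero]
  zero_mem' _ _ _ := rfl
  smul_mem' c f hf i j h := (congrArg (c • ·) (hf i j h)).trans (smul_zero c)

variable {M N K : GradedMat C} {g h l : ℤ}

lemma comp_mem_homogeneous {f : M.toMat_ ⟶ N.toMat_} {f' : N.toMat_ ⟶ K.toMat_}
    (hf : f ∈ homogeneous k M N g) (hf' : f' ∈ homogeneous k N K h) (hl : g + h = l) :
    f ≫ f' ∈ homogeneous k M K l := by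
  intro i j hij
  refine Finset.sum_eq_zero fun r _ ↦ ?_
  by_cases hr : N.deg r = M.deg i + g
  · rw [hf' r j (by lia), Limits.comp_zero]
  · rw [hf i r hr, Limits.zero_comp]

lemma id_mem_homogeneous (M : GradedMat C) : 𝟙 M.toMat_ ∈ homogeneous k M M 0 := by
  intro i j hij
  exact Mat_.id_apply_of_ne _ _ _ (by rintro rfl; simp at hij)

end GradedMat

variable (k C) in
/-- A bounded complex over the additive envelope of `C`, presented as a graded family of objects
together with a single square-zero matrix of degree `1`. -/
structure MatComplex extends GradedMat C where
  p : toMat_ ⟶ toMat_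
  p_mem : p ∈ GradedMat.homogeneous k toGradedMat toGradedMat 1
  p_comp_p : p ≫ p = 0

variable (k C) in
/-- The dg category of the complexes `MatComplex k C`, with homogeneous matrices as morphisms. -/
noncomputable abbrev matComplexData : DGData k where
  Obj := MatComplex k C
  Hom M N g := GradedMat.homogeneous k M.toGradedMat N.toGradedMat g
  homAdd _ _ _ := inferInstance
  homMod _ _ _ := inferInstance
  d {M N g} f := ⟨f.1 ≫ N.p - (-1 : k) ^ g • M.p ≫ f.1,
    sub_mem (GradedMat.comp_mem_homogeneous f.2 N.p_mem rfl)
      (Submodule.smul_mem _ _ (GradedMat.comp_mem_homogeneous M.p_mem f.2 (add_comm _ _)))⟩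
  comp β α := ⟨α.1 ≫ β.1, GradedMat.comp_mem_homogeneous α.2 β.2 (add_comm _ _)⟩
  id M := ⟨𝟙 _, M.toGradedMat.id_mem_homogeneous⟩

namespace matComplexData

variable {M N : MatComplex k C} {g h : ℤ}

@[simp]
lemma coe_cast (hgh : g = h) (f : (matComplexData k C).Hom M N g) :
    ((matComplexData k C).cast hgh f).1 = f.1 := by
  subst hgh; rfl

@[simp]
lemma coe_d (f : (matComplexData k C).Hom M N g) :
    ((matComplexData k C).d f).1 = f.1 ≫ N.p - (-1 : k) ^ g • M.p ≫ f.1 := rfl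

end matComplexData

theorem isDGCat_matComplexData : IsDGCat (matComplexData k C) where
  d_add x y := Subtype.ext (by
    simp only [Submodule.coe_add, Preadditive.add_comp, Preadditive.comp_add, smul_add]
    abel)
  d_smul c x := Subtype.ext (by simp [smul_sub, smul_comm c])
  comp_add_left _ _ _ := Subtype.ext (by simp)
  comp_add_right _ _ _ := Subtype.ext (by simp)
  comp_smul_left _ _ _ := Subtype.ext (by simp)
  comp_smul_right _ _ _ := Subtype.ext (by simp)
  d_d {M N g} x := Subtype.ext (by
    have hp : M.p ≫ M.p ≫ x.1 = 0 := by rw [← Category.assoc, M.p_comp_p, Limits.zero_comp]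
    simp [N.p_comp_p, hp, zpow_add₀])
  leibniz {A B E g h} β α := Subtype.ext (by
    simp [zpow_add₀, smul_sub, smul_smul])
  assoc _ _ _ := Subtype.ext (by simp)
  id_comp _ := Subtype.ext (by simp)
  comp_id _ := Subtype.ext (by simp)
  d_id _ := Subtype.ext (by simp)

end MatComplex

section MatIso

open CategoryTheory

variable {C : Type*} [Category* C] [Preadditive C]

/-- A bijection of the index sets together with isomorphisms of the corresponding summands gives
an isomorphism of formal direct sums. -/
noncomputable def matIsoOfEquiv {M N : Mat_ C} (e : M.ι ≃ N.ι) (α : ∀ i, M.X i ≅ N.X (e i)) :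
    M ≅ N where
  hom i j := (α i).hom ≫ (𝟙 N : Mat_.Hom N N) (e i) j
  inv j i := (𝟙 N : Mat_.Hom N N) j (e i) ≫ (α i).inv
  hom_inv_id := by
    ext i i'
    calc ∑ j, ((α i).hom ≫ (𝟙 N : Mat_.Hom N N) (e i) j) ≫
          (𝟙 N : Mat_.Hom N N) j (e i') ≫ (α i').inv
      _ = (α i).hom ≫ (𝟙 N ≫ 𝟙 N : Mat_.Hom N N) (e i) (e i') ≫ (α i').inv := by
          simp only [Mat_.comp_apply, Preadditive.sum_comp, Preadditive.comp_sum, Category.assoc]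
      _ = (𝟙 M : Mat_.Hom M M) i i' := by
          rw [Category.comp_id]
          by_cases h : i = i'
          · subst h; simp
          · simp [h]
  inv_hom_id := by
    ext j j'
    calc ∑ i, ((𝟙 N : Mat_.Hom N N) j (e i) ≫ (α i).inv) ≫
          (α i).hom ≫ (𝟙 N : Mat_.Hom N N) (e i) j'
      _ = (𝟙 N ≫ 𝟙 N : Mat_.Hom N N) j j' := by
          rw [Mat_.comp_apply, ← e.sum_comp]
          simp
      _ = (𝟙 N : Mat_.Hom N N) j j' := by rw [Category.comp_id]

lemma matIsoOfEquiv_hom_apply {M N : Mat_ C} (e : M.ι ≃ N.ι) (α : ∀ i, M.X i ≅ N.X (e i)) (i j) :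
    (matIsoOfEquiv e α).hom i j = (α i).hom ≫ (𝟙 N : Mat_.Hom N N) (e i) j := rfl

lemma matIsoOfEquiv_inv_apply {M N : Mat_ C} (e : M.ι ≃ N.ι) (α : ∀ i, M.X i ≅ N.X (e i)) (j i) :
    (matIsoOfEquiv e α).inv j i = (𝟙 N : Mat_.Hom N N) j (e i) ≫ (α i).inv := rfl

variable [Linear k C]

section Homogeneous

variable {M N : GradedMat C} (e : M.ι ≃ N.ι) (α : ∀ i, M.X i ≅ N.X (e i))

lemma matIsoOfEquiv_hom_mem (hdeg : ∀ i, M.deg i = N.deg (e i)) :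
    (matIsoOfEquiv e α).hom ∈ GradedMat.homogeneous k M N 0 := by
  intro i j hij
  rw [matIsoOfEquiv_hom_apply, N.id_mem_homogeneous (k := k) _ _ (by rwa [← hdeg]),
    Limits.comp_zero]

lemma matIsoOfEquiv_inv_mem (hdeg : ∀ i, M.deg i = N.deg (e i)) :
    (matIsoOfEquiv e α).inv ∈ GradedMat.homogeneous k N M 0 := by
  intro j i hij
  rw [matIsoOfEquiv_inv_apply, N.id_mem_homogeneous (k := k) _ _ (by rwa [← hdeg]),
    Limits.zero_comp]

end Homogeneous

/-- The graded family `G` with the matrix `p` transported from `N` along an isomorphism. -/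
noncomputable def MatComplex.transport (N : MatComplex k C) {G : GradedMat C}
    (u : G.toMat_ ≅ N.toMat_) (hu : u.hom ∈ GradedMat.homogeneous k G N.toGradedMat 0)
    (hv : u.inv ∈ GradedMat.homogeneous k N.toGradedMat G 0) : MatComplex k C where
  toGradedMat := G
  p := u.hom ≫ N.p ≫ u.inv
  p_mem := GradedMat.comp_mem_homogeneous hu
    (GradedMat.comp_mem_homogeneous N.p_mem hv (add_zero 1)) (zero_add 1)
  p_comp_p := by
    have hp : N.p ≫ N.p ≫ u.inv = 0 := by rw [← Category.assoc, N.p_comp_p, Limits.zero_comp]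
    simp [hp]

lemma isDGInverse_of_iso {M N : MatComplex k C} (u : M.toMat_ ≅ N.toMat_)
    (hu : u.hom ∈ GradedMat.homogeneous k M.toGradedMat N.toGradedMat 0)
    (hv : u.inv ∈ GradedMat.homogeneous k N.toGradedMat M.toGradedMat 0)
    (hp : M.p = u.hom ≫ N.p ≫ u.inv) :
    IsDGInverse (matComplexData k C) (A := M) (B := N) ⟨u.hom, hu⟩ ⟨u.inv, hv⟩ :=
  ⟨Subtype.ext (by simp [hp]), Subtype.ext (by simp [hp]), Subtype.ext (by simp),
    Subtype.ext (by simp)⟩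

end MatIso

namespace DGData

/-- All hom-spaces are concentrated in degree `0`: the dg category is a `k`-category. -/
def IsConcentrated (D : DGData k) : Prop :=
  ∀ ⦃A B : D.Obj⦄ ⦃i : ℤ⦄, i ≠ 0 → ∀ x : D.Hom A B i, x = 0

/-- The identification of the hom-spaces of degrees `i` and `j` when `i = j`, and the zero map
otherwise. -/
def regrade (D : DGData k) {A B : D.Obj} {i : ℤ} (j : ℤ) : D.Hom A B i →ₗ[k] D.Hom A B j :=
  if h : i = j then { toFun := D.cast h, map_add' := cast_add h, map_smul' := cast_smul h } else 0

variable {D : DGData k} {A B C : D.Obj} {i j : ℤ}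

@[simp]
lemma regrade_self (x : D.Hom A B i) : D.regrade i x = x := by
  rw [regrade, dif_pos rfl]; rfl

@[simp]
lemma regrade_regrade (h : i = j) (x : D.Hom A B i) : D.regrade i (D.regrade j x) = x := by
  subst h; simp

lemma regrade_of_ne (h : i ≠ j) (x : D.Hom A B i) : D.regrade j x = 0 := by
  rw [regrade, dif_neg h]; rfl

@[simp]
lemma regrade_cast {i' : ℤ} (h : i = i') (x : D.Hom A B i) :
    D.regrade j (D.cast h x) = D.regrade j x := by
  subst h; rfl

namespace IsConcentrated

lemma d_eq_zero (hD : IsDGCat D) (hc : D.IsConcentrated) (x : D.Hom A B i) : D.d x = 0 := by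
  obtain rfl | hi := eq_or_ne i 0
  · exact hc (by simp) _
  · rw [hc hi x, hD.d_zero]

lemma regrade_regrade_zero (hc : D.IsConcentrated) (x : D.Hom A B i) :
    D.regrade i (D.regrade 0 x) = x := by
  obtain rfl | hi := eq_or_ne i 0
  · simp
  · rw [hc hi x, map_zero, map_zero]

lemma regrade_comp (hD : IsDGCat D) (hc : D.IsConcentrated) (y : D.Hom B C j) (x : D.Hom A B i) :
    D.regrade 0 (D.comp y x) = D.cast (zero_add 0) (D.comp (D.regrade 0 y) (D.regrade 0 x)) := by
  obtain rfl | hi := eq_or_ne i 0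
  · obtain rfl | hj := eq_or_ne j 0
    · simp only [regrade_self]
      exact regrade_self (i := 0) _
    · simp [hc hj y, hD.zero_comp]
  · simp [hc hi x, hD.comp_zero]

end IsConcentrated

end DGData

section TwistFunctor

open CategoryTheory

variable {D : DGData k} (hD : IsDGCat D)

/-- The summand `A[t]` of a formal direct sum of translations is placed in degree `-t`. -/
def gradedMatOfTr (M : (matData (trData D)).Obj) : GradedMat (Deg0 hD) where
  ι := Fin M.1
  X r := ⟨(M.2 r).1⟩
  deg r := -(M.2 r).2

variable {hD}

/-- Over a `k`-category, the matrices of degree `g` between formal direct sums of translations are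
the homogeneous matrices of degree `g` (transposed, as the row index of `matData` is the target). -/
noncomputable def trMatEquiv (hc : D.IsConcentrated) (M N : (matData (trData D)).Obj) (g : ℤ) :
    (matData (trData D)).Hom M N g ≃ₗ[k]
      GradedMat.homogeneous k (gradedMatOfTr hD M) (gradedMatOfTr hD N) g where
  toFun x := ⟨fun i j ↦ D.regrade 0 (x j i), fun i j hij ↦ DGData.regrade_of_ne
    (fun h ↦ hij (by simp only [gradedMatOfTr]; lia)) _⟩
  map_add' x y := by ext i j; exact map_add (D.regrade 0) (x j i) (y j i)
  map_smul' c x := by ext i j; exact map_smul (D.regrade 0) c (x j i)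
  invFun f j i := D.regrade _ (f.1 i j)
  left_inv x := funext fun j ↦ funext fun i ↦ hc.regrade_regrade_zero (x j i)
  right_inv f := by
    ext i j
    by_cases hij : g - (M.2 i).2 + (N.2 j).2 = 0
    · exact DGData.regrade_regrade hij.symm (f.1 i j)
    · refine (DGData.regrade_of_ne hij _).trans (f.2 i j fun h ↦ hij ?_).symm
      simp only [gradedMatOfTr] at h
      lia

variable {hc : D.IsConcentrated} {M N K : (matData (trData D)).Obj} {g h : ℤ}

lemma trMatEquiv_apply (x : (matData (trData D)).Hom M N g) (i j) :
    (trMatEquiv (hD := hD) hc M N g x).1 i j = D.regrade 0 (x j i) := rfl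

lemma trMatEquiv_cast (hgh : g = h) (x : (matData (trData D)).Hom M N g) :
    (trMatEquiv (hD := hD) hc M N h ((matData (trData D)).cast hgh x)).1 =
      (trMatEquiv hc M N g x).1 := by
  subst hgh; rfl

lemma trMatEquiv_comp (y : (matData (trData D)).Hom N K h) (x : (matData (trData D)).Hom M N g) :
    (trMatEquiv (hD := hD) hc M K _ ((matData (trData D)).comp y x)).1 =
      (trMatEquiv hc M N g x).1 ≫ (trMatEquiv hc N K h y).1 := by
  ext i l
  calc D.regrade 0 (∑ j, (trData D).comp (y l j) (x j i))
    _ = ∑ j, D.regrade 0 ((trData D).comp (y l j) (x j i)) := map_sum (D.regrade 0) _ _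
    _ = ∑ j, D.cast (zero_add 0) (D.comp (D.regrade 0 (y l j)) (D.regrade 0 (x j i))) :=
      Finset.sum_congr rfl fun j _ ↦ (DGData.regrade_cast _ _).trans (hc.regrade_comp hD _ _)

lemma trMatEquiv_id (M : (matData (trData D)).Obj) :
    (trMatEquiv (hD := hD) hc M M 0 ((matData (trData D)).id M)).1 = 𝟙 _ := by
  ext i j
  by_cases h : i = j
  · subst h
    rw [trMatEquiv_apply, Mat_.id_apply_self]
    exact (congrArg _ (dif_pos rfl)).trans
      ((DGData.regrade_cast _ _).trans (DGData.regrade_self (D.id (M.2 i).1)))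
  · rw [trMatEquiv_apply, Mat_.id_apply_of_ne _ _ _ h]
    exact (congrArg _ (dif_neg h)).trans (map_zero (D.regrade 0))

lemma d_trData (hD : IsDGCat D) (hc : D.IsConcentrated) {A B : (trData D).Obj}
    (x : (trData D).Hom A B g) : (trData D).d x = 0 :=
  have smul_cast_d {A B : D.Obj} {i j : ℤ} (c : k) (h : i + 1 = j) (x : D.Hom A B i) :
      c • D.cast h (D.d x) = 0 := by
    rw [hc.d_eq_zero hD, D.cast_zero, smul_zero]
  smul_cast_d _ _ x

lemma d_matData_trData (hD : IsDGCat D) (hc : D.IsConcentrated)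
    (x : (matData (trData D)).Hom M N g) : (matData (trData D)).d x = 0 :=
  funext fun j ↦ funext fun i ↦ d_trData hD hc (x j i)

variable (hD hc) in
/-- The complex of matrices defined by a twisted complex over `(A^[•])^⊕`: as `d` vanishes, the
Maurer-Cartan equation says that the matrix `q` squares to zero. -/
noncomputable abbrev matComplexOfTwist (X : twObj (matData (trData D))) :
    MatComplex k (Deg0 hD) where
  toGradedMat := gradedMatOfTr hD X.1
  p := (trMatEquiv hc X.1 X.1 1 X.2.1).1
  p_mem := (trMatEquiv hc X.1 X.1 1 X.2.1).2
  p_comp_p := by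
    have hq : (matData (trData D)).comp X.2.1 X.2.1 = 0 := by
      simpa only [DGData.MC, d_matData_trData hD hc, zero_add] using X.2.2
    rw [← trMatEquiv_comp, hq, map_zero]
    rfl

variable (hD hc) in
/-- The dg functor sending a twisted complex over `(A^[•])^⊕` to its complex of matrices. -/
noncomputable def twistToMatComplex :
    DGFunData (twData (matData (trData D))) (matComplexData k (Deg0 hD)) where
  obj := matComplexOfTwist hD hc
  map {X Y g} x := trMatEquiv hc X.1 Y.1 g x

lemma trMatEquiv_twData_d {X Y : twObj (matData (trData D))}
    (x : (matData (trData D)).Hom X.1 Y.1 g) :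
    trMatEquiv hc X.1 Y.1 (g + 1) ((twData (matData (trData D))).d (A := X) (B := Y) x) =
      (matComplexData k (Deg0 hD)).d (A := matComplexOfTwist hD hc X)
        (B := matComplexOfTwist hD hc Y) (trMatEquiv hc X.1 Y.1 g x) := by
  have hx : (twData (matData (trData D))).d (A := X) (B := Y) x =
      (matData (trData D)).cast (add_comm 1 g) ((matData (trData D)).comp Y.2.1 x) +
        (-1 : k) ^ (g + 1) • (matData (trData D)).comp x X.2.1 := by
    refine congrArg (· + _) ?_
    rw [d_matData_trData hD hc, add_zero]
  refine (congrArg (trMatEquiv hc X.1 Y.1 (g + 1)) hx).trans (Subtype.ext ?_)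
  rw [map_add, map_smul, Submodule.coe_add, Submodule.coe_smul, trMatEquiv_cast,
    trMatEquiv_comp, trMatEquiv_comp, matComplexData.coe_d, zpow_add_one₀ (by simp)]
  simp [matComplexOfTwist, sub_eq_add_neg]

lemma isDGFun_twistToMatComplex : IsDGFun (twistToMatComplex hD hc) where
  map_add {X Y g} x y := map_add (trMatEquiv hc X.1 Y.1 g) x y
  map_smul {X Y g} c x := map_smul (trMatEquiv hc X.1 Y.1 g) c x
  map_d {X Y _} x := trMatEquiv_twData_d (X := X) (Y := Y) x
  map_comp y x := Subtype.ext (trMatEquiv_comp y x)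
  map_id X := Subtype.ext (trMatEquiv_id X.1)

variable (hD hc) in
lemma exists_matComplexOfTwist_p_eq (M : (matData (trData D)).Obj)
    {p : (gradedMatOfTr hD M).toMat_ ⟶ (gradedMatOfTr hD M).toMat_}
    (hp : p ∈ GradedMat.homogeneous k (gradedMatOfTr hD M) (gradedMatOfTr hD M) 1)
    (hpp : p ≫ p = 0) :
    ∃ (q : (matData (trData D)).Hom M M 1) (hq : (matData (trData D)).MC q),
      (matComplexOfTwist hD hc ⟨M, q, hq⟩).p = p := by
  obtain ⟨q, hq⟩ := (trMatEquiv hc M M 1).surjective ⟨p, hp⟩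
  have hqp : (trMatEquiv hc M M 1 q).1 = p := congrArg Subtype.val hq
  refine ⟨q, ?_, hqp⟩
  rw [DGData.MC, d_matData_trData hD hc, zero_add,
    ← (trMatEquiv (hD := hD) hc M M _).map_eq_zero_iff]
  exact Subtype.ext (by rw [trMatEquiv_comp, hqp, hpp]; rfl)

lemma exists_twist_of_iso (N : MatComplex k (Deg0 hD)) (M : (matData (trData D)).Obj)
    (u : (gradedMatOfTr hD M).toMat_ ≅ N.toMat_)
    (hu : u.hom ∈ GradedMat.homogeneous k (gradedMatOfTr hD M) N.toGradedMat 0)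
    (hv : u.inv ∈ GradedMat.homogeneous k N.toGradedMat (gradedMatOfTr hD M) 0) :
    ∃ (q : (matData (trData D)).Hom M M 1) (hq : (matData (trData D)).MC q),
      IsDGInverse (matComplexData k (Deg0 hD)) (A := matComplexOfTwist hD hc ⟨M, q, hq⟩) (B := N)
        ⟨u.hom, hu⟩ ⟨u.inv, hv⟩ := by
  obtain ⟨q, hq, hp⟩ := exists_matComplexOfTwist_p_eq hD hc M (N.transport u hu hv).p_mem
    (N.transport u hu hv).p_comp_p
  exact ⟨q, hq, isDGInverse_of_iso (M := matComplexOfTwist hD hc ⟨M, q, hq⟩) u hu hv hp⟩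

theorem isDGEquivalence_twistToMatComplex : IsDGEquivalence (twistToMatComplex hD hc) := by
  refine ⟨isDGFun_twistToMatComplex, fun X Y g ↦ (trMatEquiv hc X.1 Y.1 g).bijective, fun N ↦ ?_⟩
  let e := (Fintype.equivFin N.ι).symm
  let M : (matData (trData D)).Obj :=
    ⟨Fintype.card N.ι, fun r ↦ ((N.X (e r)).obj, -N.deg (e r))⟩
  have hdeg r : (gradedMatOfTr hD M).deg r = N.deg (e r) := neg_neg _
  let α r : (gradedMatOfTr hD M).X r ≅ N.X (e r) := Iso.refl (N.X (e r))
  have hu : (matIsoOfEquiv e α).hom ∈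
      GradedMat.homogeneous k (gradedMatOfTr hD M) N.toGradedMat 0 :=
    matIsoOfEquiv_hom_mem (M := gradedMatOfTr hD M) (N := N.toGradedMat) e α hdeg
  have hv : (matIsoOfEquiv e α).inv ∈
      GradedMat.homogeneous k N.toGradedMat (gradedMatOfTr hD M) 0 :=
    matIsoOfEquiv_inv_mem (M := gradedMatOfTr hD M) (N := N.toGradedMat) e α hdeg
  obtain ⟨q, hq, h⟩ := exists_twist_of_iso (hc := hc) N M (matIsoOfEquiv e α) hu hv
  exact ⟨⟨M, q, hq⟩, _, _, h⟩

end TwistFunctor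

namespace DGData

variable {D : DGData k} {A B B' B'' : D.Obj} {i i' i'' : ℤ}

lemma hcast_add (hB : B = B') (hi : i = i') (x y : D.Hom A B i) :
    D.hcast rfl hB hi (x + y) = D.hcast rfl hB hi x + D.hcast rfl hB hi y := by
  subst hB hi; rfl

lemma hcast_smul (hB : B = B') (hi : i = i') (c : k) (x : D.Hom A B i) :
    D.hcast rfl hB hi (c • x) = c • D.hcast rfl hB hi x := by
  subst hB hi; rfl

lemma hcast_eq_zero_iff (hB : B = B') (hi : i = i') (x : D.Hom A B i) :
    D.hcast rfl hB hi x = 0 ↔ x = 0 := by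
  subst hB hi; rfl

lemma hcast_hcast (hB : B = B') (hi : i = i') (hB' : B' = B'') (hi' : i' = i'')
    (x : D.Hom A B i) :
    D.hcast rfl hB' hi' (D.hcast rfl hB hi x) = D.hcast rfl (hB.trans hB') (hi.trans hi') x := by
  subst hB hi hB' hi'; rfl

end DGData

section ChbFunctor

open CategoryTheory

variable {D : DGData k}

instance chbHomAdd (X Y : ChbObj D) (g : ℤ) : AddCommGroup ((chbData D).Hom X Y g) :=
  (chbData D).homAdd X Y g

instance chbHomMod (X Y : ChbObj D) (g : ℤ) : Module k ((chbData D).Hom X Y g) :=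
  (chbData D).homMod X Y g

namespace ChbObj

instance (X : ChbObj D) : Finite (Σ i, Fin (X.X i).1) := by
  obtain ⟨N, hN⟩ := X.bounded
  refine Finite.of_surjective
    (fun p : Σ i : Set.Icc (-(N : ℤ)) N, Fin (X.X i).1 ↦ (⟨p.1, p.2⟩ : Σ i, Fin (X.X i).1)) ?_
  rintro ⟨i, r⟩
  have hi : i ∈ Set.Icc (-(N : ℤ)) N := by
    by_contra h
    have h0 := hN i (by simp only [Set.mem_Icc] at h; lia)
    exact (Fin.cast h0 r).elim0
  exact ⟨⟨⟨i, hi⟩, r⟩, rfl⟩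

noncomputable instance (X : ChbObj D) : Fintype (Σ i, Fin (X.X i).1) := Fintype.ofFinite _

/-- The differential of a bounded complex as an endomorphism of degree `1` in `Ch^b_dg(A)`. -/
def differential (X : ChbObj D) : (chbData D).Hom X X 1 := X.dd

/-- The total family of all the summands of a bounded complex. -/
noncomputable def total (hD : IsDGCat D) (X : ChbObj D) : GradedMat (Deg0 hD) where
  ι := Σ i, Fin (X.X i).1
  fintype := inferInstance
  X p := ⟨(X.X p.1).2 p.2⟩
  deg p := p.1

end ChbObj

section Cast

variable {X Y : ChbObj D} {g h : ℤ}

lemma chbData_cast_apply (hgh : g = h) (α : (chbData D).Hom X Y g) (i : ℤ) :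
    (chbData D).cast hgh α i =
      (matData D).hcast rfl (congrArg (fun j ↦ Y.X (i + j)) hgh) rfl (α i) := by
  subst hgh; rfl

lemma chbData_d (α : (chbData D).Hom X Y g) :
    (chbData D).d α = (chbData D).cast (add_comm 1 g) ((chbData D).comp Y.differential α) -
      (-1 : k) ^ g • (chbData D).comp α X.differential := by
  funext i
  refine congrArg (· - _) ?_
  have hcomp : (chbData D).comp Y.differential α i = (matData D).hcast rfl
      (congrArg Y.X (show i + g + 1 = i + (1 + g) by ring)) (add_zero 0)
      ((matData D).comp (Y.dd (i + g)) (α i)) := rfl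
  rw [chbData_cast_apply, hcomp]
  exact (DGData.hcast_hcast (D := matData D) _ _ _ rfl _).symm

lemma chbData_comp_self_eq_zero_iff (α : (chbData D).Hom X X 1) :
    (chbData D).comp α α = 0 ↔ ∀ i, (matData D).comp (α (i + 1)) (α i) = 0 := by
  refine funext_iff.trans (forall_congr' fun i ↦ ?_)
  have hi : i + 1 + 1 = i + (1 + 1) := by ring
  exact DGData.hcast_eq_zero_iff (D := matData D) (congrArg X.X hi) (add_zero 0) _

end Cast

variable {hD : IsDGCat D} {X Y Z : ChbObj D} {g h : ℤ}

/-- The entry of a homogeneous map of bounded complexes from the summand `p` of the source to the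
summand `q` of the target, which is zero if their degrees do not differ by `g`. -/
def chbEntry (g : ℤ) (p : Σ i, Fin (X.X i).1) (q : Σ j, Fin (Y.X j).1) :
    (chbData D).Hom X Y g →ₗ[k] D.Hom ((X.X p.1).2 p.2) ((Y.X q.1).2 q.2) 0 :=
  if h : p.1 + g = q.1 then
    { toFun α := (matData D).hcast rfl (congrArg Y.X h) rfl (α p.1) q.2 p.2
      map_add' α α' := congrArg (fun x : (matData D).Hom _ _ 0 ↦ x q.2 p.2)
        (DGData.hcast_add (D := matData D) (congrArg Y.X h) rfl (α p.1) (α' p.1))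
      map_smul' c α := congrArg (fun x : (matData D).Hom _ _ 0 ↦ x q.2 p.2)
        (DGData.hcast_smul (D := matData D) (congrArg Y.X h) rfl c (α p.1)) }
  else 0

lemma chbEntry_self (α : (chbData D).Hom X Y g) (i : ℤ) (r l) :
    chbEntry g ⟨i, r⟩ ⟨i + g, l⟩ α = α i l r := by
  rw [chbEntry, dif_pos rfl]; rfl

lemma chbEntry_of_eq_hcast {i j e : ℤ} (hj : i + g = j) (he : e = 0) (α : (chbData D).Hom X Y g)
    (x : (matData D).Hom (X.X i) (Y.X j) e)
    (hα : α i = (matData D).hcast rfl (congrArg Y.X hj.symm) he x) (r l) :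
    chbEntry g ⟨i, r⟩ ⟨j, l⟩ α = D.cast he (x l r) := by
  subst hj he
  rw [chbEntry_self, hα]
  rfl

lemma chbEntry_of_ne (α : (chbData D).Hom X Y g) {p : Σ i, Fin (X.X i).1}
    {q : Σ j, Fin (Y.X j).1} (hpq : p.1 + g ≠ q.1) : chbEntry g p q α = 0 := by
  rw [chbEntry, dif_neg hpq]; rfl

lemma chbEntry_comp (hD : IsDGCat D) (β : (chbData D).Hom Y Z h) (α : (chbData D).Hom X Y g)
    (p : Σ i, Fin (X.X i).1) (s : Σ i, Fin (Z.X i).1) :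
    chbEntry (h + g) p s ((chbData D).comp β α) =
      ∑ q, D.cast (zero_add 0) (D.comp (chbEntry h q s β) (chbEntry g p q α)) := by
  obtain ⟨i, r⟩ := p
  obtain ⟨j, l⟩ := s
  have hzero (q : Σ i, Fin (Y.X i).1) (hq : i + g ≠ q.1) :
      D.cast (zero_add 0) (D.comp (chbEntry h q ⟨j, l⟩ β) (chbEntry g ⟨i, r⟩ q α)) = 0 := by
    rw [chbEntry_of_ne α hq, hD.comp_zero, D.cast_zero]
  by_cases hj : i + g + h = j
  · subst hj
    have hentry : chbEntry (h + g) ⟨i, r⟩ ⟨i + g + h, l⟩ ((chbData D).comp β α) =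
        D.cast (zero_add 0) (∑ m, D.comp (β (i + g) l m) (α i m r)) :=
      chbEntry_of_eq_hcast (by ring) (zero_add 0) _ ((matData D).comp (β (i + g)) (α i)) rfl r l
    refine hentry.trans (Fintype.sum_of_injective (fun m ↦ (⟨i + g, m⟩ : Σ j, Fin (Y.X j).1))
      (sigma_mk_injective (β := fun j ↦ Fin (Y.X j).1)) _ _ (fun q hq ↦ hzero q ?_) (fun m ↦ ?_))
    · obtain ⟨j, m⟩ := q
      rintro rfl
      exact hq ⟨m, rfl⟩
    · rw [chbEntry_self, chbEntry_self]; rfl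
  · rw [chbEntry_of_ne _ (by grind)]
    refine (Finset.sum_eq_zero fun q _ ↦ ?_).symm
    by_cases hq : i + g = q.1
    · rw [chbEntry_of_ne β (by grind), hD.zero_comp, D.cast_zero]
    · exact hzero q hq

/-- Homogeneous maps of bounded complexes are the homogeneous matrices between the total
families. -/
noncomputable def totalEquiv (hD : IsDGCat D) (X Y : ChbObj D) (g : ℤ) :
    (chbData D).Hom X Y g ≃ₗ[k] GradedMat.homogeneous k (X.total hD) (Y.total hD) g where
  toFun α := ⟨fun p q ↦ chbEntry g p q α, fun _ _ hpq ↦ chbEntry_of_ne α (Ne.symm hpq)⟩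
  map_add' α α' := by ext p q; exact map_add (chbEntry g p q) α α'
  map_smul' c α := by ext p q; exact map_smul (chbEntry g p q) c α
  invFun f i l r := f.1 ⟨i, r⟩ ⟨i + g, l⟩
  left_inv α := by
    funext i l r
    exact chbEntry_self α i r l
  right_inv f := by
    ext p ⟨j, l⟩
    by_cases hj : p.1 + g = j
    · subst hj
      exact chbEntry_self _ _ _ _
    · exact (chbEntry_of_ne _ hj).trans (f.2 p ⟨j, l⟩ (Ne.symm hj)).symm

lemma totalEquiv_cast (hgh : g = h) (α : (chbData D).Hom X Y g) :
    (totalEquiv hD X Y h ((chbData D).cast hgh α)).1 = (totalEquiv hD X Y g α).1 := by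
  subst hgh; rfl

lemma totalEquiv_comp (β : (chbData D).Hom Y Z h) (α : (chbData D).Hom X Y g) :
    (totalEquiv hD X Z _ ((chbData D).comp β α)).1 =
      (totalEquiv hD X Y g α).1 ≫ (totalEquiv hD Y Z h β).1 := by
  ext p s
  exact chbEntry_comp hD β α p s

lemma totalEquiv_id (X : ChbObj D) : (totalEquiv hD X X 0 ((chbData D).id X)).1 = 𝟙 _ := by
  ext ⟨i, r⟩ ⟨j, l⟩
  by_cases hj : i = j
  · subst hj
    refine (chbEntry_of_eq_hcast (add_zero i) rfl _ ((matData D).id (X.X i)) rfl r l).trans ?_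
    by_cases hr : r = l
    · subst hr
      exact (dif_pos rfl).trans (Mat_.id_apply_self (X.total hD).toMat_ ⟨i, r⟩).symm
    · exact (dif_neg hr).trans (Mat_.id_apply_of_ne (X.total hD).toMat_ ⟨i, r⟩ ⟨i, l⟩
        fun h ↦ hr (sigma_mk_injective (i := i) h)).symm
  · have hij : j ≠ i + 0 := by simpa using Ne.symm hj
    exact ((totalEquiv hD X X 0 _).2 ⟨i, r⟩ ⟨j, l⟩ hij).trans
      ((X.total hD).id_mem_homogeneous (k := k) ⟨i, r⟩ ⟨j, l⟩ hij).symm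

/-- The total complex of a bounded complex. -/
noncomputable abbrev matComplexOfChb (hD : IsDGCat D) (X : ChbObj D) : MatComplex k (Deg0 hD) where
  toGradedMat := X.total hD
  p := (totalEquiv hD X X 1 X.differential).1
  p_mem := (totalEquiv hD X X 1 X.differential).2
  p_comp_p := by
    rw [← totalEquiv_comp, (chbData_comp_self_eq_zero_iff X.differential).2 X.dd_sq, map_zero]
    rfl

/-- The dg functor sending a bounded complex to its total complex. -/
noncomputable def chbToMatComplex (hD : IsDGCat D) :
    DGFunData (chbData D) (matComplexData k (Deg0 hD)) where
  obj := matComplexOfChb hD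
  map {X Y g} α := totalEquiv hD X Y g α

lemma totalEquiv_d (α : (chbData D).Hom X Y g) :
    totalEquiv hD X Y (g + 1) ((chbData D).d α) =
      (matComplexData k (Deg0 hD)).d (A := matComplexOfChb hD X) (B := matComplexOfChb hD Y)
        (totalEquiv hD X Y g α) :=
  Subtype.ext (by
    rw [chbData_d, map_sub, map_smul, Submodule.coe_sub, Submodule.coe_smul, totalEquiv_cast,
      totalEquiv_comp, totalEquiv_comp, matComplexData.coe_d])

lemma isDGFun_chbToMatComplex : IsDGFun (chbToMatComplex hD) where
  map_add {X Y g} α α' := map_add (totalEquiv hD X Y g) α α'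
  map_smul {X Y g} c α := map_smul (totalEquiv hD X Y g) c α
  map_d α := totalEquiv_d α
  map_comp β α := Subtype.ext (totalEquiv_comp β α)
  map_id X := Subtype.ext (totalEquiv_id X)

theorem isDGCat_chbData (hD : IsDGCat D) : IsDGCat (chbData D) :=
  isDGCat_matComplexData.of_faithful (isDGFun_chbToMatComplex (hD := hD))
    fun X Y g ↦ (totalEquiv hD X Y g).injective

lemma exists_matComplexOfChb_p_eq (X : ChbObj D) {p : (X.total hD).toMat_ ⟶ (X.total hD).toMat_}
    (hp : p ∈ GradedMat.homogeneous k (X.total hD) (X.total hD) 1) (hpp : p ≫ p = 0) :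
    ∃ dd dd_sq, (matComplexOfChb hD ⟨X.X, dd, dd_sq, X.bounded⟩).p = p := by
  obtain ⟨dd, hdd⟩ := (totalEquiv hD X X 1).surjective ⟨p, hp⟩
  have hddp : (totalEquiv hD X X 1 dd).1 = p := congrArg Subtype.val hdd
  refine ⟨dd, (chbData_comp_self_eq_zero_iff (X := X) dd).1 ?_, hddp⟩
  rw [← (totalEquiv hD X X _).map_eq_zero_iff]
  exact Subtype.ext (by rw [totalEquiv_comp, hddp, hpp]; rfl)

lemma matData_comp_zero (hD : IsDGCat D) {A B C : matObj D} {g h : ℤ}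
    (y : (matData D).Hom B C h) : (matData D).comp y (0 : (matData D).Hom A B g) = 0 := by
  funext l i
  change ∑ j, D.comp (y l j) (0 : D.Hom (A.2 i) (B.2 j) g) = 0
  exact Finset.sum_eq_zero fun j _ ↦ hD.comp_zero (y l j)

/-- The complex with zero differential whose term in degree `i` consists of the members of the
graded family `M` of degree `i`. -/
noncomputable def chbOfGradedMat (M : GradedMat (Deg0 hD)) : ChbObj D where
  X i := ⟨Fintype.card {r // M.deg r = i}, fun l ↦ (M.X ((Fintype.equivFin _).symm l).1).obj⟩
  dd _ := 0
  dd_sq _ := matData_comp_zero hD _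
  bounded := by
    refine ⟨Finset.univ.sup fun r ↦ (M.deg r).natAbs, fun i hi ↦ Fintype.card_eq_zero_iff.2 ⟨?_⟩⟩
    rintro ⟨r, rfl⟩
    have hr : (M.deg r).natAbs ≤ Finset.univ.sup fun r ↦ (M.deg r).natAbs :=
      Finset.le_sup (f := fun r ↦ (M.deg r).natAbs) (Finset.mem_univ r)
    lia

theorem isDGEquivalence_chbToMatComplex : IsDGEquivalence (chbToMatComplex hD) := by
  refine ⟨isDGFun_chbToMatComplex, fun X Y g ↦ (totalEquiv hD X Y g).bijective, fun N ↦ ?_⟩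
  let M := chbOfGradedMat N.toGradedMat
  let e : (M.total hD).ι ≃ N.ι :=
    (Equiv.sigmaCongrRight fun i ↦ (Fintype.equivFin {r // N.deg r = i}).symm).trans
      (Equiv.sigmaFiberEquiv N.deg)
  have hdeg p : (M.total hD).deg p = N.deg (e p) := ((Fintype.equivFin _).symm p.2).2.symm
  let α p : (M.total hD).X p ≅ N.X (e p) := Iso.refl (N.X (e p))
  let u : (M.total hD).toMat_ ≅ N.toMat_ := matIsoOfEquiv e α
  have hu : u.hom ∈ GradedMat.homogeneous k (M.total hD) N.toGradedMat 0 :=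
    matIsoOfEquiv_hom_mem (N := N.toGradedMat) e α hdeg
  have hv : u.inv ∈ GradedMat.homogeneous k N.toGradedMat (M.total hD) 0 :=
    matIsoOfEquiv_inv_mem (N := N.toGradedMat) e α hdeg
  obtain ⟨dd, dd_sq, hp⟩ := exists_matComplexOfChb_p_eq M (N.transport u hu hv).p_mem
    (N.transport u hu hv).p_comp_p
  exact ⟨⟨M.X, dd, dd_sq, M.bounded⟩, ⟨u.hom, hu⟩, ⟨u.inv, hv⟩,
    isDGInverse_of_iso (M := matComplexOfChb hD ⟨M.X, dd, dd_sq, M.bounded⟩) u hu hv hp⟩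

end ChbFunctor

section Permutation

open CategoryTheory

variable {D : DGData k} {hD : IsDGCat D} {hc : D.IsConcentrated}

lemma oneSided_of_monotone (hc : D.IsConcentrated) {X : twObj (matData (trData D))}
    (hX : Monotone fun r ↦ -(X.1.2 r).2) : OneSided X := fun j i hji ↦
  hc (by have := hX (show j ≤ i from hji); simp only at this; lia) _

/-- The summands permuted by `σ`. -/
abbrev permute (M : (matData (trData D)).Obj) (σ : Equiv.Perm (Fin M.1)) :
    (matData (trData D)).Obj := ⟨M.1, fun r ↦ M.2 (σ r)⟩

/-- The isomorphism of graded families inverse to the permutation matrix `permMat D M σ`. -/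
noncomputable def permuteIso (hD : IsDGCat D) (M : (matData (trData D)).Obj)
    (σ : Equiv.Perm (Fin M.1)) :
    (gradedMatOfTr hD (permute M σ)).toMat_ ≅ (gradedMatOfTr hD M).toMat_ :=
  matIsoOfEquiv σ fun r ↦ Iso.refl ((gradedMatOfTr hD M).X (σ r))

lemma trMatEquiv_permMat (M : (matData (trData D)).Obj) (σ : Equiv.Perm (Fin M.1)) :
    (trMatEquiv hc M (permute M σ) 0 (permMat D M σ)).1 = (permuteIso hD M σ).inv := by
  ext i j
  refine .trans ?_ (Category.comp_id ((𝟙 (gradedMatOfTr hD M).toMat_ : Mat_.Hom _ _) i (σ j))).symm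
  by_cases h : σ j = i
  · subst h
    refine .trans ?_ (Mat_.id_apply_self _ _).symm
    exact (congrArg _ (dif_pos rfl)).trans
      ((DGData.regrade_cast _ _).trans (DGData.regrade_self (D.id (M.2 (σ j)).1)))
  · refine .trans ?_ (Mat_.id_apply_of_ne _ _ _ (Ne.symm h)).symm
    exact (congrArg _ (dif_neg h)).trans (map_zero (D.regrade 0))

theorem exists_oneSided_permMat (hD : IsDGCat D) (hc : D.IsConcentrated)
    (X : twObj (matData (trData D))) :
    ∃ (σ : Equiv.Perm (Fin X.1.1)) (q : (matData (trData D)).Hom (permute X.1 σ) (permute X.1 σ) 1)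
      (hq : (matData (trData D)).MC q), OneSided (D := D) ⟨permute X.1 σ, q, hq⟩ ∧
        ∃ v, IsDGInverse (twData (matData (trData D))) (A := X) (B := ⟨permute X.1 σ, q, hq⟩)
          (permMat D X.1 σ) v := by
  let σ := Tuple.sort fun r ↦ -(X.1.2 r).2
  let G := gradedMatOfTr hD X.1
  let G' := gradedMatOfTr hD (permute X.1 σ)
  have hu : (permuteIso hD X.1 σ).hom ∈ GradedMat.homogeneous k G' G 0 :=
    matIsoOfEquiv_hom_mem (M := G') (N := G) σ _ fun _ ↦ rfl
  have hv : (permuteIso hD X.1 σ).inv ∈ GradedMat.homogeneous k G G' 0 :=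
    matIsoOfEquiv_inv_mem (M := G') (N := G) σ _ fun _ ↦ rfl
  obtain ⟨q, hq, h⟩ := exists_twist_of_iso (hc := hc) (matComplexOfTwist hD hc X) (permute X.1 σ)
    (permuteIso hD X.1 σ) hu hv
  obtain ⟨u, v, hu, -, huv⟩ :=
    (isDGEquivalence_twistToMatComplex (hD := hD) (hc := hc)).exists_isDGInverse_of_map
      (A := X) (B := ⟨permute X.1 σ, q, hq⟩) h.symm
  have hperm : u = permMat D X.1 σ := (trMatEquiv hc X.1 (permute X.1 σ) 0).injective
    (hu.trans (Subtype.ext (trMatEquiv_permMat X.1 σ).symm))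
  have hσ : Monotone fun r ↦ -(X.1.2 (σ r)).2 := Tuple.monotone_sort fun r ↦ -(X.1.2 r).2
  exact ⟨σ, q, hq, oneSided_of_monotone hc hσ, v, hperm ▸ huv⟩

theorem isDGEquivalence_pretrIncl (hD : IsDGCat D) (hc : D.IsConcentrated) :
    IsDGEquivalence (pretrIncl D) := by
  refine ⟨⟨fun _ _ ↦ rfl, fun _ _ ↦ rfl, fun _ ↦ rfl, fun _ _ ↦ rfl, fun _ ↦ rfl⟩,
    fun _ _ _ ↦ Function.bijective_id, fun X ↦ ?_⟩
  obtain ⟨σ, q, hq, hX, v, h⟩ := exists_oneSided_permMat hD hc X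
  exact ⟨⟨_, hX⟩, v, _, h.symm⟩

theorem exists_isDGEquivalence_twist_chb (hD : IsDGCat D) (hc : D.IsConcentrated) :
    ∃ G : DGFunData (twData (matData (trData D))) (chbData D), IsDGEquivalence G := by
  obtain ⟨G, hG⟩ :=
    (isDGEquivalence_chbToMatComplex (hD := hD)).exists_inverse isDGCat_matComplexData
  exact ⟨G.comp (twistToMatComplex hD hc),
    hG.comp (isDGCat_chbData hD) isDGEquivalence_twistToMatComplex⟩

end Permutation

/-- **Statement 9.** Let `A` be a `k`-category, regarded as a dg category with
hom-spaces concentrated in degree `0`.  Then the inclusion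
`pretr(A) ⊆ Twist((A^[•])^⊕)` of the full dg subcategory of one-sided twisted
complexes is an equivalence of dg categories, and both dg categories are
equivalent to `Ch^b_dg(A)`.  In particular, every twisted complex over
`(A^[•])^⊕` is dg-isomorphic, via a permutation of its summands, to a
one-sided twisted complex. -/
theorem statement_9 (D : DGData k) (hD : IsDGCat D)
    (hconc : ∀ {A B : D.Obj} (i : ℤ), i ≠ 0 → ∀ x : D.Hom A B i, x = 0) :
    -- the inclusion is an equivalence of dg categories
    IsDGEquivalence (pretrIncl D) ∧
    -- `Twist((A^[•])^⊕)` is dg-equivalent to `Ch^b_dg(A)` …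
    (∃ G : DGFunData (twData (matData (trData D))) (chbData D), IsDGEquivalence G) ∧
    -- … and so is `pretr(A)`
    (∃ H : DGFunData (pretrData D) (chbData D), IsDGEquivalence H) ∧
    -- every twisted complex is dg-isomorphic, via the permutation matrix of a
    -- permutation of its summands, to a one-sided twisted complex
    (∀ X : twObj (matData (trData D)),
      ∃ (σ : Equiv.Perm (Fin X.1.1))
        (q' : (matData (trData D)).Hom ⟨X.1.1, fun r => X.1.2 (σ r)⟩
          ⟨X.1.1, fun r => X.1.2 (σ r)⟩ 1)
        (hq' : (matData (trData D)).MC q'),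
        OneSided (D := D) ⟨⟨X.1.1, fun r => X.1.2 (σ r)⟩, ⟨q', hq'⟩⟩ ∧
        ∃ v : (twData (matData (trData D))).Hom
            ⟨⟨X.1.1, fun r => X.1.2 (σ r)⟩, ⟨q', hq'⟩⟩ X 0,
          (twData (matData (trData D))).d (A := X)
            (B := ⟨⟨X.1.1, fun r => X.1.2 (σ r)⟩, ⟨q', hq'⟩⟩)
            (permMat D X.1 σ) = 0 ∧
          (twData (matData (trData D))).d
            (A := ⟨⟨X.1.1, fun r => X.1.2 (σ r)⟩, ⟨q', hq'⟩⟩) (B := X) v = 0 ∧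
          (twData (matData (trData D))).cast (by norm_num)
            ((twData (matData (trData D))).comp (A := X)
              (B := ⟨⟨X.1.1, fun r => X.1.2 (σ r)⟩, ⟨q', hq'⟩⟩) (C := X)
              v (permMat D X.1 σ)) = (twData (matData (trData D))).id X ∧
          (twData (matData (trData D))).cast (by norm_num)
            ((twData (matData (trData D))).comp
              (A := ⟨⟨X.1.1, fun r => X.1.2 (σ r)⟩, ⟨q', hq'⟩⟩) (B := X)
              (C := ⟨⟨X.1.1, fun r => X.1.2 (σ r)⟩, ⟨q', hq'⟩⟩)
              (permMat D X.1 σ) v) =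
            (twData (matData (trData D))).id
              ⟨⟨X.1.1, fun r => X.1.2 (σ r)⟩, ⟨q', hq'⟩⟩) := by
  have hc : D.IsConcentrated := fun _ _ i hi x ↦ hconc i hi x
  have hchb : IsDGCat (chbData D) := isDGCat_chbData hD
  have hincl := isDGEquivalence_pretrIncl hD hc
  obtain ⟨G, hG⟩ := exists_isDGEquivalence_twist_chb hD hc
  refine ⟨hincl, ⟨G, hG⟩, ⟨G.comp (pretrIncl D), hG.comp hchb hincl⟩, fun X ↦ ?_⟩
  obtain ⟨σ, q', hq', hX, v, hσ, hv, hσv, hvσ⟩ := exists_oneSided_permMat hD hc X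
  exact ⟨σ, q', hq', hX, v, hσ, hv, hvσ, hσv⟩

end Statement9

end P
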